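/- There exists an absolute constant C ≥ 1 such that for every odd prime p, every multiplicative subgroup Γ of F_p^*, every Γ-invariant real function f on F_p which is not identically zero and satisfies ∑_{x∈F_p} f(x) = 0, and every integer k ≥ 2, at least one of the following two inequalities holds: E⁺_{2^{k+1}}(f) ≤ C·(1 + log(‖f‖₁/‖f‖₂)) · ‖f‖₂^{2^{k+1}} · E⁺_{2^k}(f) · |Γ|^{−1/8}, or E⁺_{2^{k+1}}(f) ≤ 2·‖f‖₂^{2^{k+2}}. -/

import Mathlib

open Finset

/-- `(f∘f)(x) = ∑_y f(y)·f(y+x)`. -/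
noncomputable def corr (p : ℕ) [NeZero p] (f : ZMod p → ℝ) (x : ZMod p) : ℝ :=
  ∑ y, f y * f (y + x)

/-- `E⁺_m(f) = ∑_x ((f∘f)(x))^m`. -/
noncomputable def EplusF (p : ℕ) [NeZero p] (m : ℕ) (f : ZMod p → ℝ) : ℝ :=
  ∑ x, (corr p f x) ^ m

/-- `‖f‖₁ = ∑_x |f(x)|`. -/
noncomputable def l1norm (p : ℕ) [NeZero p] (f : ZMod p → ℝ) : ℝ :=
  ∑ x, |f x|

/-- `‖f‖₂ = (∑_x f(x)²)^{1/2}`. -/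
noncomputable def l2norm (p : ℕ) [NeZero p] (f : ZMod p → ℝ) : ℝ :=
  Real.sqrt (∑ x, (f x) ^ 2)

open Finset

namespace S3
open Polynomial

lemma poly_zero {F : Type*} [Field F] (V : F[X]) (S : Finset F) (e : F → ℕ)
    (h : ∀ τ ∈ S, (X - C τ) ^ e τ ∣ V) (hd : V.natDegree < ∑ τ ∈ S, e τ) : V = 0 := by
  by_contra hV
  have h1 : (∏ τ ∈ S, (X - C τ) ^ e τ) ∣ V := by
    refine Finset.prod_dvd_of_coprime (fun a _ b _ hab => ?_) h
    exact (pairwise_coprime_X_sub_C Function.injective_id hab).pow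
  have h2 := natDegree_le_of_dvd h1 hV
  rw [natDegree_prod_of_monic _ _ (fun i _ => (monic_X_sub_C i).pow _)] at h2
  simp only [natDegree_pow, natDegree_X_sub_C, mul_one] at h2
  omega

variable {p : ℕ} [hp : Fact p.Prime]

lemma cast_ne (k : ℕ) (h0 : k ≠ 0) (hk : k < p) : (k : ZMod p) ≠ 0 := by
  rw [Ne, ZMod.natCast_eq_zero_iff]
  exact fun h => absurd (Nat.le_of_dvd (Nat.pos_of_ne_zero h0) h) (by omega)

lemma deriv_zero (Q : (ZMod p)[X]) (h : derivative Q = 0) (hd : Q.natDegree < p) :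
    ∃ c, Q = C c := by
  refine ⟨Q.coeff 0, ?_⟩
  ext i
  rcases i with _ | i
  · simp
  · rw [coeff_C, if_neg (by omega)]
    by_cases hi : i + 1 ≤ Q.natDegree
    · have h1 := congrArg (fun q => q.coeff i) h
      simp only [coeff_derivative, coeff_zero] at h1
      have h2 := cast_ne (p := p) (i + 1) (by omega) (by omega)
      push_cast at h2
      exact (mul_eq_zero.mp h1).resolve_right h2
    · exact coeff_eq_zero_of_natDegree_lt (by omega)

lemma ratio (G B : (ZMod p)[X]) (hB : B ≠ 0) (hW : derivative G * B = G * derivative B)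
    (hG : G.natDegree < p) (hBd : B.natDegree < p) : ∃ c, G = C c * B := by
  classical
  obtain ⟨g1, hg1⟩ := EuclideanDomain.gcd_dvd_left G B
  obtain ⟨b1, hb1⟩ := EuclideanDomain.gcd_dvd_right G B
  set d := EuclideanDomain.gcd G B with hd
  have hd0 : d ≠ 0 := by rintro h; rw [h] at hb1; simp at hb1; exact hB hb1
  have hb0 : b1 ≠ 0 := by rintro h; rw [h] at hb1; simp at hb1; exact hB hb1
  have hcop : IsCoprime g1 b1 := by
    have h := EuclideanDomain.gcd_eq_gcd_ab G B
    rw [← hd] at h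
    refine ⟨EuclideanDomain.gcdA G B, EuclideanDomain.gcdB G B, ?_⟩
    apply mul_left_cancel₀ hd0
    calc d * (EuclideanDomain.gcdA G B * g1 + EuclideanDomain.gcdB G B * b1)
        = (d * g1) * EuclideanDomain.gcdA G B + (d * b1) * EuclideanDomain.gcdB G B := by ring
      _ = d * 1 := by rw [← hg1, ← hb1, ← h, mul_one]
  have hw : wronskian g1 b1 = 0 := by
    have : d ^ 2 * wronskian g1 b1 = 0 := by
      rw [wronskian]
      have h := hW
      rw [hg1, hb1] at h
      simp only [derivative_mul] at h
      linear_combination -h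
    exact (mul_eq_zero.mp this).resolve_left (pow_ne_zero _ hd0)
  rw [hcop.wronskian_eq_zero_iff] at hw
  by_cases hg0 : g1 = 0
  · exact ⟨0, by rw [hg1, hg0]; simp⟩
  have hgd : g1.natDegree < p := by
    have : G.natDegree = d.natDegree + g1.natDegree := by
      conv_lhs => rw [hg1]
      exact natDegree_mul hd0 hg0
    omega
  have hbd : b1.natDegree < p := by
    have : B.natDegree = d.natDegree + b1.natDegree := by
      conv_lhs => rw [hb1]
      exact natDegree_mul hd0 hb0
    omega
  obtain ⟨c, hc⟩ := deriv_zero g1 hw.1 hgd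
  obtain ⟨c', hc'⟩ := deriv_zero b1 hw.2 hbd
  have hc'0 : c' ≠ 0 := by rintro rfl; simp at hc'; exact hb0 hc'
  refine ⟨c / c', ?_⟩
  rw [hg1, hb1, hc, hc']
  have : (C c : (ZMod p)[X]) = C (c / c') * C c' := by rw [← C_mul, div_mul_cancel₀ _ hc'0]
  rw [this]; ring

lemma oneD (A B : (ZMod p)[X]) (D n' : ℕ) (hDp : D < p) (hp2 : p ≠ 2)
    (hA : A.natDegree < D) (hB : B.natDegree + 1 < D ∨ B = 0) (k : ZMod p → ℕ)
    (hk : ∀ τ, k τ ≤ n')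
    (hdvd : ∀ τ, (X - C τ) ^ (k τ - 1) ∣ 2 * A + (X - C τ) * B)
    (hsum : 2 * D + n' ≤ ∑ τ, (k τ - 2)) : A = 0 := by
  have h2 : (2 : ZMod p) ≠ 0 := by
    have := cast_ne (p := p) 2 (by norm_num) (by have := hp.out.two_le; omega)
    simpa using this
  have hC2 : (C (2 : ZMod p) : (ZMod p)[X]) = 2 := map_ofNat C 2
  have key0 : 2 * A = 0 → A = 0 := by
    intro h
    have : C (2 : ZMod p) * A = 0 := by rw [hC2]; exact h
    exact (mul_eq_zero.mp this).resolve_left (C_ne_zero.mpr h2)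
  have hn2 : (2 * A).natDegree < D := lt_of_le_of_lt (by
    have : (2 * A) = C (2 : ZMod p) * A := by rw [hC2]
    rw [this]; exact natDegree_C_mul_le _ _) hA
  -- the main case
  by_cases hB0 : B = 0
  · apply key0
    refine poly_zero _ univ (fun τ => k τ - 1) (fun τ _ => by simpa [hB0] using hdvd τ) ?_
    have : ∑ τ, (k τ - 2) ≤ ∑ τ, (k τ - 1) := Finset.sum_le_sum (fun i _ => by omega)
    omega
  have hBD : B.natDegree + 1 < D := hB.resolve_right hB0
  have hV : 2 * derivative A * B - 2 * A * derivative B + B ^ 2 = 0 := by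
    refine poly_zero _ univ (fun τ => k τ - 2) (fun τ _ => ?_) ?_
    · obtain ⟨Z, hZ⟩ := hdvd τ
      rcases Nat.lt_or_ge (k τ) 2 with hlt | hge
      · have : k τ - 2 = 0 := by omega
        simp [this]
      obtain ⟨j, hj⟩ : ∃ j, k τ = j + 2 := ⟨k τ - 2, by omega⟩
      have e1 : k τ - 1 = j + 1 := by omega
      have e2 : k τ - 2 = j := by omega
      rw [e1] at hZ
      simp only [e2]
      have h3 := congrArg derivative hZ
      simp only [derivative_add, derivative_mul, derivative_sub, derivative_X, derivative_C,
        derivative_pow, sub_zero, one_mul, derivative_ofNat, zero_mul, zero_add] at h3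
      refine ⟨((j + 1 : ℕ) : (ZMod p)[X]) * Z * B + (X - C τ) * derivative Z * B
        - (X - C τ) * Z * derivative B, ?_⟩
      simp only [Nat.add_sub_cancel, map_natCast, mul_one] at h3
      have hpow : (X - C τ) ^ (j + 1) = (X - C τ) ^ j * (X - C τ) := pow_succ _ _
      rw [hpow] at hZ h3
      linear_combination B * h3 - derivative B * hZ
    · have b1 : (derivative A).natDegree ≤ A.natDegree - 1 := natDegree_derivative_le A
      have b2 : (derivative B).natDegree ≤ B.natDegree - 1 := natDegree_derivative_le B
      have d1 : (2 * derivative A * B).natDegree ≤ 2 * D - 1 := by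
        have : (2 * derivative A * B) = C (2 : ZMod p) * (derivative A * B) := by
          rw [hC2]; ring
        rw [this]
        refine (natDegree_C_mul_le _ _).trans (natDegree_mul_le.trans ?_); omega
      have d2 : (2 * A * derivative B).natDegree ≤ 2 * D - 1 := by
        refine natDegree_mul_le.trans ?_; omega
      have d3 : (B ^ 2).natDegree ≤ 2 * D - 1 := by
        refine natDegree_pow_le.trans ?_; omega
      have := natDegree_add_le_of_degree_le ((natDegree_sub_le_of_le d1 d2).trans (le_of_eq (max_self _))) d3
      omega
  obtain ⟨c, hc⟩ := ratio (2 * A + X * B) B hB0 (by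
      simp only [derivative_add, derivative_mul, derivative_X, derivative_ofNat]
      linear_combination hV) (by
      have : (X * B).natDegree ≤ B.natDegree + 1 := by
        refine natDegree_mul_le.trans ?_; rw [natDegree_X]; omega
      have := natDegree_add_le (2 * A) (X * B)
      rcases le_max_iff.mp this with h | h <;> omega) (by omega)
  exfalso
  apply hB0
  refine poly_zero _ (univ.erase c) (fun τ => k τ - 1) (fun τ hτ => ?_) ?_
  · have hne : c - τ ≠ 0 := sub_ne_zero.mpr (Finset.ne_of_mem_erase hτ).symm
    have h := hdvd τ
    have e : 2 * A + (X - C τ) * B = C (c - τ) * B := by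
      rw [C_sub]; linear_combination hc
    rw [e] at h
    have hu : IsUnit (C (c - τ)) := isUnit_C.mpr (isUnit_iff_ne_zero.mpr hne)
    exact (hu.dvd_mul_left).mp h
  · have h1 : ∑ τ, (k τ - 2) ≤ ∑ τ, (k τ - 1) := Finset.sum_le_sum (fun i _ => by omega)
    have h2 := Finset.add_sum_erase univ (fun τ => k τ - 1) (Finset.mem_univ c)
    have h3 := hk c
    omega
end S3

open Finset

namespace S3
open Polynomial

section loc
variable {F : Type*} [Field F]

lemma chain {R : Type*} [CommRing R] [Algebra F R] (g : Fin 3 → R[X]) (P : MvPolynomial (Fin 3) F) :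
    derivative (MvPolynomial.aeval g P) =
      ∑ i, MvPolynomial.aeval g (MvPolynomial.pderiv i P) * derivative (g i) := by
  induction P using MvPolynomial.induction_on with
  | C a =>
    simp
  | add q r hq hr =>
    simp only [map_add, hq, hr, add_mul, Finset.sum_add_distrib]
  | mul_X q j hq =>
    simp only [map_mul, MvPolynomial.aeval_X, derivative_mul, hq, Derivation.leibniz,
      map_add, smul_eq_mul, add_mul, Finset.sum_add_distrib]
    rw [Finset.sum_mul, add_comm]
    refine congrArg₂ (· + ·) ?_ ?_
    · rw [Finset.sum_eq_single j]
      · rw [MvPolynomial.pderiv_X_self, map_one, mul_one]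
      · intro i _ hij
        rw [MvPolynomial.pderiv_X_of_ne (Ne.symm hij), map_zero, mul_zero, zero_mul]
      · exact fun h => absurd (Finset.mem_univ j) h
    · exact Finset.sum_congr rfl (fun i _ => by ring)

noncomputable def phiv (s t u : F) : Fin 3 → F[X][X] :=
  ![C (C s) + C X * X ^ 2, C (C t) - C X * X, C (C u + X)]

noncomputable def rayv (m a b : F) : Fin 3 → F[X] :=
  ![C (a - m * b) + C (m ^ 2) * X, C b - C m * X, X]

lemma supp_mul (q r : F[X][X]) (hq : ∀ l j, 2 * j < l → (q.coeff l).coeff j = 0)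
    (hr : ∀ l j, 2 * j < l → (r.coeff l).coeff j = 0) :
    ∀ l j, 2 * j < l → ((q * r).coeff l).coeff j = 0 := by
  intro l j h
  rw [coeff_mul, finsetSum_coeff]
  refine Finset.sum_eq_zero (fun x hx => ?_)
  rw [coeff_mul]
  refine Finset.sum_eq_zero (fun y hy => ?_)
  rw [Finset.HasAntidiagonal.mem_antidiagonal] at hx hy
  rcases Nat.lt_or_ge (2 * y.1) x.1 with h1 | h1
  · rw [hq _ _ h1, zero_mul]
  · rw [hr x.2 y.2 (by omega), mul_zero]

lemma supp_phi (s t u : F) (P : MvPolynomial (Fin 3) F) :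
    ∀ l j, 2 * j < l → ((MvPolynomial.aeval (phiv s t u) P).coeff l).coeff j = 0 := by
  have hC : ∀ (c : F) l j, 2 * j < l → ((C (C c) : F[X][X]).coeff l).coeff j = 0 := by
    intro c l j h
    rw [coeff_C, if_neg (by omega), coeff_zero]
  induction P using MvPolynomial.induction_on with
  | C a =>
    have : MvPolynomial.aeval (phiv s t u) (MvPolynomial.C a) = (C (C a) : F[X][X]) := by
      rw [MvPolynomial.aeval_C]; rfl
    rw [this]; exact hC a
  | add q r hq hr =>
    intro l j h
    rw [map_add, coeff_add, coeff_add, hq l j h, hr l j h, add_zero]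
  | mul_X q j hq =>
    rw [map_mul, MvPolynomial.aeval_X]
    refine supp_mul _ _ hq ?_
    fin_cases j
    · intro l j h
      simp only [phiv, Fin.zero_eta, Matrix.cons_val_zero]
      rw [coeff_add, coeff_add, hC _ _ _ h, zero_add, coeff_C_mul, coeff_X_pow]
      split_ifs with h2
      · rw [mul_one, coeff_X, if_neg (by omega)]
      · simp
    · intro l j h
      simp only [phiv, Fin.mk_one, Matrix.cons_val_one, Matrix.cons_val_zero]
      rw [coeff_sub, coeff_sub, hC _ _ _ h, zero_sub, coeff_C_mul, coeff_X, neg_eq_zero]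
      split_ifs with h2
      · rw [mul_one, coeff_X, if_neg (by omega)]
      · simp
    · intro l j h
      simp only [phiv, Fin.reduceFinMk, Matrix.cons_val]
      rw [coeff_C, if_neg (by omega), coeff_zero]

lemma phi_dvd (q : F[X][X]) (hq : ∀ l j, 2 * j < l → (q.coeff l).coeff j = 0)
    (M : Finset F) (hM : ∀ m ∈ M, q.eval (C m) = 0) : C (X ^ (M.card / 2)) ∣ q := by
  rw [C_dvd_iff_dvd_coeff]
  intro l
  rw [X_pow_dvd_iff]
  intro j hj
  set r : F[X] := ∑ l ∈ range (2 * j + 1), monomial l ((q.coeff l).coeff j) with hr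
  have hrc : ∀ l, r.coeff l = (q.coeff l).coeff j := by
    intro l
    rw [hr, finsetSum_coeff]
    simp only [coeff_monomial]
    rw [Finset.sum_ite_eq']
    split_ifs with h
    · rfl
    · rw [hq]; simp at h; omega
  rw [← hrc]
  have : r = 0 := by
    refine eq_zero_of_natDegree_lt_card_of_eval_eq_zero' r M (fun m hm => ?_) ?_
    · have h1 := congrArg (fun z => z.coeff j) (hM m hm)
      simp only [coeff_zero] at h1
      rw [← h1, eval_eq_sum_range' (n := max (q.natDegree + 1) (r.natDegree + 1)) (by omega),
        eval_eq_sum_range' (n := max (q.natDegree + 1) (r.natDegree + 1)) (by omega),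
        finsetSum_coeff]
      refine Finset.sum_congr rfl (fun i _ => ?_)
      rw [hrc, ← C_pow, coeff_mul_C]
    · have : r.natDegree ≤ 2 * j := by
        rw [hr]
        refine natDegree_sum_le_of_forall_le _ _ (fun i hi => ?_)
        refine (natDegree_monomial_le _).trans ?_
        rw [Finset.mem_range] at hi; omega
      omega
  rw [this, coeff_zero]

lemma ray_eq (s t u m : F) (P : MvPolynomial (Fin 3) F) :
    MvPolynomial.aeval (rayv m (s + m * t) (t + m * u)) P =
      ((MvPolynomial.aeval (phiv s t u) P).eval (C m)).comp (X - C u) := by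
  induction P using MvPolynomial.induction_on with
  | C a =>
    rw [MvPolynomial.aeval_C, MvPolynomial.aeval_C]
    have : (algebraMap F F[X][X]) a = C (C a) := rfl
    rw [this]; simp
  | add q r hq hr => rw [map_add, map_add, hq, hr, eval_add, add_comp]
  | mul_X q j hq =>
    rw [map_mul, map_mul, hq, eval_mul, mul_comp, MvPolynomial.aeval_X, MvPolynomial.aeval_X]
    congr 1
    fin_cases j
    · simp [rayv, phiv]; ring
    · simp [rayv, phiv]; ring
    · simp [rayv, phiv]

open MvPolynomial (pderiv) in
lemma ray_local (P : MvPolynomial (Fin 3) F) (s t u : F) (M : Finset F)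
    (hM : ∀ m ∈ M, MvPolynomial.aeval (rayv m (s + m * t) (t + m * u)) P = 0) (m : F)
    (R : MvPolynomial (Fin 3) F →ₐ[F] F[X])
    (hR : R = MvPolynomial.aeval (rayv m (s + m * t) (t + m * u))) :
    (X - C u) ^ (M.card / 2 - 1) ∣ 2 * C m * R (pderiv 0 P) - R (pderiv 1 P) ∧
    (X - C u) ^ (M.card / 2 - 1) ∣ 2 * R (pderiv 0 P) + (X - C u) *
      (4 * C m ^ 2 * R (pderiv 0 (pderiv 0 P)) - 2 * C m * R (pderiv 1 (pderiv 0 P))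
       - 2 * C m * R (pderiv 0 (pderiv 1 P)) + R (pderiv 1 (pderiv 1 P))) := by
  set Φ : MvPolynomial (Fin 3) F →ₐ[F] F[X][X] := MvPolynomial.aeval (phiv s t u) with hΦ
  have hdvd : C (X ^ (M.card / 2)) ∣ Φ P := by
    refine phi_dvd _ (supp_phi s t u P) M (fun m hm => ?_)
    have h := hM m hm
    rw [ray_eq] at h
    have h2 := congrArg (fun q => q.comp (X + C u)) h
    simp only [comp_assoc, zero_comp] at h2
    simpa using h2
  have hch : ∀ Q, derivative (Φ Q) = C X * (2 * X * Φ (pderiv 0 Q) - Φ (pderiv 1 Q)) := by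
    intro Q
    rw [hΦ, chain, Fin.sum_univ_three]
    simp [phiv]
    ring
  obtain hk | ⟨k, hk⟩ : M.card / 2 - 1 = 0 ∨ ∃ k, M.card / 2 = k + 1 := by
    rcases Nat.eq_zero_or_pos (M.card / 2) with h | h
    · left; omega
    · right; exact ⟨M.card / 2 - 1, by omega⟩
  · simp [hk]
  have hk' : M.card / 2 - 1 = k := by omega
  rw [hk']
  rw [hk] at hdvd
  set Θ := 2 * X * Φ (pderiv 0 P) - Φ (pderiv 1 P) with hΘ
  have d1 : C (X ^ k) ∣ Θ := by
    obtain ⟨Z, hZ⟩ := hdvd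
    refine ⟨derivative Z, ?_⟩
    have h := hch P
    rw [hZ, derivative_C_mul, pow_succ, C_mul] at h
    have hX : (C X : F[X][X]) ≠ 0 := C_ne_zero.mpr X_ne_zero
    apply mul_left_cancel₀ hX
    rw [← h]; ring
  have d2 : C (X ^ k) ∣ derivative Θ := by
    obtain ⟨Z, hZ⟩ := d1
    exact ⟨derivative Z, by rw [hZ, derivative_C_mul]⟩
  have tr : ∀ q : F[X][X], C (X ^ k) ∣ q → (X - C u) ^ k ∣ (q.eval (C m)).comp (X - C u) := by
    rintro q ⟨Z, rfl⟩
    refine ⟨(Z.eval (C m)).comp (X - C u), ?_⟩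
    rw [eval_mul, eval_C, mul_comp, X_pow_comp]
  have e1 := tr _ d1
  have e2 := tr _ d2
  have hRe : ∀ Q, R Q = ((Φ Q).eval (C m)).comp (X - C u) := fun Q => by rw [hR, ray_eq]
  simp only [hRe]
  constructor
  · convert e1 using 1
    rw [hΘ]; simp
  · convert e2 using 1
    rw [hΘ]
    simp only [derivative_sub, derivative_mul, derivative_X, derivative_ofNat, hch]
    simp
    ring
end loc
end S3

open Finset

namespace S3
open Polynomial

section poly
variable {F : Type*} [Field F]

lemma td_pderiv (P : MvPolynomial (Fin 3) F) (i : Fin 3) (h : 0 < P.totalDegree) :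
    (MvPolynomial.pderiv i P).totalDegree < P.totalDegree := by
  conv_lhs => rw [MvPolynomial.totalDegree]
  rw [Finset.sup_lt_iff h]
  intro d hd
  rw [MvPolynomial.mem_support_iff, MvPolynomial.coeff_pderiv] at hd
  have h1 : d + Finsupp.single i 1 ∈ P.support := by
    rw [MvPolynomial.mem_support_iff]; exact left_ne_zero_of_mul hd
  have h2 := MvPolynomial.le_totalDegree h1
  rw [Finsupp.sum_add_index' (by simp) (by simp)] at h2
  simp at h2
  omega

lemma exists_poly [DecidableEq F] (L : Finset (F × F × F)) (d : ℕ)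
    (hd : L.card * (3 * d + 1) < (d + 1) ^ 3) :
    ∃ P : MvPolynomial (Fin 3) F, P ≠ 0 ∧ P.totalDegree ≤ 3 * d ∧
      ∀ r ∈ L, MvPolynomial.aeval (rayv r.1 r.2.1 r.2.2) P = 0 := by
  let E := Fin 3 → Fin (d + 1)
  let ex : E → (Fin 3 →₀ ℕ) := fun e => Finsupp.equivFunOnFinite.symm (fun i => (e i : ℕ))
  have hex : Function.Injective ex := by
    intro a b hab
    have := Finsupp.equivFunOnFinite.symm.injective hab
    funext i
    exact Fin.ext (congrFun this i)
  let lc : (E → F) →ₗ[F] MvPolynomial (Fin 3) F :=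
    Fintype.linearCombination F (fun e => MvPolynomial.monomial (ex e) (1 : F))
  have hlc : ∀ c, lc c = ∑ e, c e • MvPolynomial.monomial (ex e) (1 : F) := fun c => by
    simp [lc, Fintype.linearCombination_apply]
  let ev : (E → F) →ₗ[F] (L × Fin (3 * d + 1) → F) :=
    LinearMap.pi (fun rj => (lcoeff F (rj.2 : ℕ)) ∘ₗ
      (MvPolynomial.aeval (rayv rj.1.1.1 rj.1.1.2.1 rj.1.1.2.2)).toLinearMap ∘ₗ lc)
  have hk : LinearMap.ker ev ≠ ⊥ := by
    apply LinearMap.ker_ne_bot_of_finrank_lt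
    rw [Module.finrank_fintype_fun_eq_card, Module.finrank_fintype_fun_eq_card]
    simp [E]
    exact hd
  obtain ⟨c, hc, hc0⟩ := (Submodule.ne_bot_iff _).mp hk
  have hcoef : ∀ e, (lc c).coeff (ex e) = c e := by
    intro e
    rw [hlc, MvPolynomial.coeff_sum, Finset.sum_eq_single e]
    · simp
    · intro b _ hb
      rw [MvPolynomial.coeff_smul, MvPolynomial.coeff_monomial, if_neg (fun h => hb (hex h)),
        smul_zero]
    · exact fun h => absurd (Finset.mem_univ e) h
  have htd : (lc c).totalDegree ≤ 3 * d := by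
    rw [hlc]
    refine MvPolynomial.totalDegree_finsetSum_le (fun e _ => ?_)
    refine (MvPolynomial.totalDegree_smul_le _ _).trans
      ((MvPolynomial.totalDegree_monomial_le _ _).trans ?_)
    simp only [ex]
    rw [Finsupp.sum_fintype _ _ (by simp), Fin.sum_univ_three]
    simp
    have h0 := (e 0).isLt
    have h1 := (e 1).isLt
    have h2 := (e 2).isLt
    omega
  refine ⟨lc c, ?_, htd, ?_⟩
  · intro h
    apply hc0
    funext e
    rw [← hcoef e, h]; simp
  · intro r hr
    ext j
    rw [coeff_zero]
    by_cases hj : j < 3 * d + 1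
    · have h := congrFun (LinearMap.mem_ker.mp hc) (⟨r, hr⟩, ⟨j, hj⟩)
      simpa [ev] using h
    · refine coeff_eq_zero_of_natDegree_lt (lt_of_le_of_lt
        (MvPolynomial.aeval_natDegree_le _ htd _ (n := 1) ?_) (by omega))
      intro i
      fin_cases i
      · simp only [rayv, Fin.zero_eta, Matrix.cons_val_zero]; compute_degree
      · simp only [rayv, Fin.mk_one, Matrix.cons_val_one, Matrix.cons_val_zero]; compute_degree
      · simp [rayv]
end poly

variable {p : ℕ} [hp : Fact p.Prime]

/-- number of rays of `L` through the point `(s,t,u)` -/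
def rho (L : Finset (ZMod p × ZMod p × ZMod p)) (s t u : ZMod p) : ℕ :=
  (univ.filter (fun m : ZMod p => (m, s + m * t, t + m * u) ∈ L)).card

set_option maxHeartbeats 400000 in
open MvPolynomial (pderiv) in
lemma core1 (hp2 : p ≠ 2) (L : Finset (ZMod p × ZMod p × ZMod p)) (hL : L.Nonempty) (D n : ℕ)
    (hDp : D + 2 < p) (hn : ∀ s t u, rho L s t u ≤ n)
    (hP : ∃ P : MvPolynomial (Fin 3) (ZMod p), P ≠ 0 ∧ P.totalDegree ≤ D ∧
      ∀ r ∈ L, MvPolynomial.aeval (rayv r.1 r.2.1 r.2.2) P = 0)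
    (hT : ∀ r ∈ L, 2 * (D + 2) + n ≤ ∑ τ, (rho L (r.2.1 - r.1 * r.2.2 + r.1 ^ 2 * τ)
      (r.2.2 - r.1 * τ) τ / 2 - 2)) : False := by
  let S : Set (MvPolynomial (Fin 3) (ZMod p)) := {P | P ≠ 0 ∧ P.totalDegree ≤ D ∧
      ∀ r ∈ L, MvPolynomial.aeval (rayv r.1 r.2.1 r.2.2) P = 0}
  have hS : S.Nonempty := hP
  obtain ⟨P, ⟨hP0, hPD, hPv⟩, hmin⟩ := WellFounded.has_min (measure MvPolynomial.totalDegree).wf S hS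
  have hdeg : ∀ (Q : MvPolynomial (Fin 3) (ZMod p)) (r : ZMod p × ZMod p × ZMod p),
      Q.totalDegree ≤ D → (MvPolynomial.aeval (rayv r.1 r.2.1 r.2.2) Q).natDegree ≤ D := by
    intro Q r hQ
    refine (MvPolynomial.aeval_natDegree_le _ hQ _ (n := 1) ?_).trans (by omega)
    intro i
    fin_cases i
    · simp only [rayv, Fin.zero_eta, Matrix.cons_val_zero]; compute_degree
    · simp only [rayv, Fin.mk_one, Matrix.cons_val_one, Matrix.cons_val_zero]; compute_degree
    · simp [rayv]
  by_cases hd0 : P.totalDegree = 0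
  · rw [MvPolynomial.totalDegree_eq_zero_iff_eq_C] at hd0
    obtain ⟨r, hr⟩ := hL
    have h := hPv r hr
    rw [hd0, MvPolynomial.aeval_C] at h
    apply hP0
    rw [hd0]
    rw [Polynomial.algebraMap_apply, C_eq_zero] at h
    simp at h
    rw [h, map_zero]
  have hpos : 0 < P.totalDegree := Nat.pos_of_ne_zero hd0
  have htd : ∀ i (Q : MvPolynomial (Fin 3) (ZMod p)), Q.totalDegree ≤ D →
      (pderiv i Q).totalDegree ≤ D := by
    intro i Q hQ
    rcases Nat.eq_zero_or_pos Q.totalDegree with h | h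
    · rw [MvPolynomial.totalDegree_eq_zero_iff_eq_C] at h
      rw [h, MvPolynomial.pderiv_C]; simp
    · exact (td_pderiv Q i h).le.trans hQ
  -- all partials vanish on L
  have hvan : ∀ i, ∀ r ∈ L, MvPolynomial.aeval (rayv r.1 r.2.1 r.2.2) (pderiv i P) = 0 := by
    have key : ∀ r ∈ L, MvPolynomial.aeval (rayv r.1 r.2.1 r.2.2) (pderiv 0 P) = 0 ∧
      MvPolynomial.aeval (rayv r.1 r.2.1 r.2.2) (pderiv 1 P) = 0 ∧
      MvPolynomial.aeval (rayv r.1 r.2.1 r.2.2) (pderiv 2 P) = 0 := by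
      rintro ⟨m, a, b⟩ hr
      have hTr := hT (m, a, b) hr
      simp only at hTr ⊢
      set R := MvPolynomial.aeval (R := ZMod p) (rayv m a b) with hR
      set k : ZMod p → ℕ := fun τ => rho L (a - m * b + m ^ 2 * τ) (b - m * τ) τ / 2 with hk
      have hloc : ∀ τ, (X - C τ) ^ (k τ - 1) ∣ 2 * C m * R (pderiv 0 P) - R (pderiv 1 P) ∧
          (X - C τ) ^ (k τ - 1) ∣ 2 * R (pderiv 0 P) + (X - C τ) *
          (4 * C m ^ 2 * R (pderiv 0 (pderiv 0 P)) - 2 * C m * R (pderiv 1 (pderiv 0 P))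
          - 2 * C m * R (pderiv 0 (pderiv 1 P)) + R (pderiv 1 (pderiv 1 P))) := by
        intro τ
        have e1 : a - m * b + m ^ 2 * τ + m * (b - m * τ) = a := by ring
        have e2 : b - m * τ + m * τ = b := by ring
        refine ray_local P (a - m * b + m ^ 2 * τ) (b - m * τ) τ
          (univ.filter (fun m' : ZMod p => (m', (a - m * b + m ^ 2 * τ) + m' * (b - m * τ),
          (b - m * τ) + m' * τ) ∈ L)) ?_ m R (by rw [e1, e2])
        intro m' hm'
        have h3 := (Finset.mem_filter.mp hm').2
        exact hPv (m', (a - m * b + m ^ 2 * τ) + m' * (b - m * τ), (b - m * τ) + m' * τ) h3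
      have hdR : ∀ Q : MvPolynomial (Fin 3) (ZMod p), Q.totalDegree ≤ D → (R Q).natDegree ≤ D :=
        fun Q hQ => hdeg Q (m, a, b) hQ
      have hsum2 : ∑ τ, (k τ - 2) ≤ ∑ τ, (k τ - 1) := Finset.sum_le_sum (fun i _ => by omega)
      have hW : 2 * C m * R (pderiv 0 P) - R (pderiv 1 P) = 0 := by
        refine poly_zero _ univ (fun τ => k τ - 1) (fun τ _ => (hloc τ).1) ?_
        have h1 : (2 * C m * R (pderiv 0 P) - R (pderiv 1 P)).natDegree ≤ D := by
          refine (natDegree_sub_le_of_le (m := D) (n := D) ?_ (hdR _ (htd _ _ hPD))).trans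
            (le_of_eq (max_self _))
          have : 2 * C m * R (pderiv 0 P) = C (2 * m) * R (pderiv 0 P) := by
            rw [C_mul, map_ofNat C 2]
          rw [this]
          exact (natDegree_C_mul_le _ _).trans (hdR _ (htd _ _ hPD))
        have h2 : 2 * (D + 2) + n ≤ ∑ τ, (k τ - 2) := hTr
        omega
      have hA : R (pderiv 0 P) = 0 := by
        refine oneD (R (pderiv 0 P)) _ (D + 2) n hDp hp2 ?_ (Or.inl ?_) k ?_
          (fun τ => (hloc τ).2) hTr
        · have := hdR _ (htd 0 _ hPD)
          omega
        · have hh : ∀ (c : ZMod p) i j, (C c * R (pderiv i (pderiv j P))).natDegree ≤ D :=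
            fun c i j => (natDegree_C_mul_le _ _).trans (hdR _ (htd _ _ (htd _ _ hPD)))
          have e : 4 * C m ^ 2 * R (pderiv 0 (pderiv 0 P)) - 2 * C m * R (pderiv 1 (pderiv 0 P))
            - 2 * C m * R (pderiv 0 (pderiv 1 P)) + R (pderiv 1 (pderiv 1 P)) =
            C (4 * m ^ 2) * R (pderiv 0 (pderiv 0 P)) - C (2 * m) * R (pderiv 1 (pderiv 0 P))
            - C (2 * m) * R (pderiv 0 (pderiv 1 P)) + C 1 * R (pderiv 1 (pderiv 1 P)) := by
            rw [C_mul, C_mul, C_pow, map_ofNat C 2, map_ofNat C 4, C_1, one_mul]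
          rw [e]
          have q1 := (natDegree_sub_le_of_le (hh (4 * m ^ 2) 0 0) (hh (2 * m) 1 0)).trans
            (le_of_eq (max_self _))
          have q2 := (natDegree_sub_le_of_le q1 (hh (2 * m) 0 1)).trans (le_of_eq (max_self _))
          have q3 := natDegree_add_le_of_degree_le q2 (hh 1 1 1)
          omega
        · intro τ
          exact (Nat.div_le_self _ _).trans (hn _ _ _)
      have hB : R (pderiv 1 P) = 0 := by
        rw [hA, mul_zero, zero_sub, neg_eq_zero] at hW; exact hW
      refine ⟨hA, hB, ?_⟩
      have h0 : R P = 0 := hPv (m, a, b) hr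
      have h1 := congrArg derivative h0
      rw [hR, chain, Fin.sum_univ_three, ← hR, hA, hB] at h1
      simpa [rayv] using h1
    intro i r hr
    fin_cases i
    · exact (key r hr).1
    · exact (key r hr).2.1
    · exact (key r hr).2.2
  have hzero : ∀ i, pderiv i P = 0 := by
    intro i
    by_contra hne
    exact hmin (pderiv i P) ⟨hne, htd i P hPD, hvan i⟩ (td_pderiv P i hpos)
  -- P is constant
  apply hd0
  rw [MvPolynomial.totalDegree_eq_zero_iff_eq_C]
  ext e
  rw [MvPolynomial.coeff_C]
  split_ifs with h
  · rw [← h]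
  · obtain ⟨i, hi⟩ : ∃ i, e i ≠ 0 := by
      by_contra hcon
      push Not at hcon
      exact h (Finsupp.ext (fun i => by simp [hcon i]))
    by_contra hne
    have hsup : e ∈ P.support := MvPolynomial.mem_support_iff.mpr hne
    have h2 := MvPolynomial.le_totalDegree hsup
    have h3 : e i ≤ e.sum fun _ x => x := by
      rw [Finsupp.sum_fintype _ _ (by simp)]
      exact Finset.single_le_sum (f := fun j => e j) (by simp) (Finset.mem_univ i)
    have h4 := congrArg (MvPolynomial.coeff (e - Finsupp.single i 1)) (hzero i)
    have h5 : e - Finsupp.single i 1 + Finsupp.single i 1 = e :=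
      tsub_add_cancel_of_le (Finsupp.single_le_iff.mpr (by omega))
    rw [MvPolynomial.coeff_pderiv, h5, MvPolynomial.coeff_zero] at h4
    have h6 := (mul_eq_zero.mp h4).resolve_left hne
    have h7 := cast_ne (p := p) (e i) hi (by omega)
    apply h7
    rw [← h6]
    simp only [Finsupp.coe_tsub, Pi.sub_apply, Finsupp.single_eq_same]
    rw [← Nat.cast_add_one]
    congr 1
    omega
end S3

open Finset

namespace S3

def psi (r : ℕ) : ℕ := ∑ i ∈ range (r + 1), (i / 2 - 2)

lemma psi_lower (r : ℕ) : (r : ℝ) ^ 2 / 8 - 13 ≤ psi r := by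
  have h : ∀ r : ℕ, ((r : ℝ) + 1) * (r - 10) / 4 ≤ psi r := by
    intro r
    induction r with
    | zero => simp [psi]; norm_num
    | succ k ih =>
      have e : psi (k + 1) = psi k + ((k + 1) / 2 - 2) := by
        unfold psi; rw [Finset.sum_range_succ]
      have h2 : k + 1 ≤ 2 * ((k + 1) / 2 - 2) + 5 := by omega
      have h3 : ((k : ℝ) + 1) ≤ 2 * (((k + 1) / 2 - 2 : ℕ) : ℝ) + 5 := by exact_mod_cast h2
      rw [e]
      push_cast
      nlinarith
  have := h r
  nlinarith [sq_nonneg ((r : ℝ) - 9)]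

variable {p : ℕ} [hp : Fact p.Prime]

def sig (L : Finset (ZMod p × ZMod p × ZMod p)) : ℕ :=
  ∑ t, ∑ u, ∑ s, psi (rho L s t u)

lemma rho_mono {L L' : Finset (ZMod p × ZMod p × ZMod p)} (h : L ⊆ L') (s t u : ZMod p) :
    rho L s t u ≤ rho L' s t u :=
  Finset.card_le_card (fun _ hm => by
    rw [Finset.mem_filter] at hm ⊢
    exact ⟨hm.1, h hm.2⟩)

lemma rho_erase (L : Finset (ZMod p × ZMod p × ZMod p)) (m a b : ZMod p)
    (s t u : ZMod p) :
    psi (rho L s t u) ≤ psi (rho (L.erase (m, a, b)) s t u) +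
      (if t = b - m * u then (if s = a - m * t then (rho L s t u / 2 - 2) else 0) else 0) := by
  by_cases h1 : t = b - m * u ∧ s = a - m * t
  · rw [if_pos h1.1, if_pos h1.2]
    have hle : rho L s t u ≤ rho (L.erase (m, a, b)) s t u + 1 := by
      unfold rho
      have : (univ.filter (fun m' : ZMod p => (m', s + m' * t, t + m' * u) ∈ L)) ⊆
        insert m (univ.filter (fun m' : ZMod p => (m', s + m' * t, t + m' * u) ∈ L.erase (m, a, b))) := by
        intro x hx
        rw [Finset.mem_filter] at hx
        by_cases hxm : x = m
        · exact Finset.mem_insert.mpr (Or.inl hxm)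
        · refine Finset.mem_insert_of_mem (Finset.mem_filter.mpr ⟨hx.1, Finset.mem_erase.mpr ⟨?_, hx.2⟩⟩)
          intro h; exact hxm (congrArg Prod.fst h)
      exact (Finset.card_le_card this).trans (Finset.card_insert_le _ _)
    have hge := rho_mono (Finset.erase_subset (m, a, b) L) s t u
    rcases Nat.lt_or_ge (rho (L.erase (m, a, b)) s t u) (rho L s t u) with h | h
    · have e : rho L s t u = rho (L.erase (m, a, b)) s t u + 1 := by omega
      rw [e]
      unfold psi
      rw [Finset.sum_range_succ]
    · have e : rho L s t u = rho (L.erase (m, a, b)) s t u := by omega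
      rw [e]; omega
  · have e : rho L s t u = rho (L.erase (m, a, b)) s t u := by
      unfold rho
      congr 1
      ext x
      simp only [Finset.mem_filter, Finset.mem_univ, true_and, Finset.mem_erase, ne_eq]
      constructor
      · intro hx
        refine ⟨fun h => h1 ?_, hx⟩
        simp only [Prod.mk.injEq] at h
        obtain ⟨rfl, h2, h3⟩ := h
        exact ⟨by rw [← h3]; ring, by rw [← h2]; ring⟩
      · exact fun h => h.2
    rw [← e]; omega

lemma sig_erase (L : Finset (ZMod p × ZMod p × ZMod p)) (m a b : ZMod p) :
    sig L ≤ sig (L.erase (m, a, b)) +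
      ∑ τ, (rho L (a - m * b + m ^ 2 * τ) (b - m * τ) τ / 2 - 2) := by
  have h : sig L ≤ sig (L.erase (m, a, b)) + ∑ t, ∑ u, ∑ s,
      (if t = b - m * u then (if s = a - m * t then (rho L s t u / 2 - 2) else 0) else 0) := by
    unfold sig
    simp only [← Finset.sum_add_distrib]
    exact Finset.sum_le_sum fun t _ => Finset.sum_le_sum fun u _ => Finset.sum_le_sum fun s _ =>
      rho_erase L m a b s t u
  refine h.trans (Nat.add_le_add_left (le_of_eq ?_) _)
  rw [Finset.sum_comm]
  refine Finset.sum_congr rfl (fun u _ => ?_)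
  rw [Finset.sum_eq_single (b - m * u)]
  · simp only [if_true]
    rw [Finset.sum_ite_eq' univ (a - m * (b - m * u)), if_pos (Finset.mem_univ _)]
    have : a - m * (b - m * u) = a - m * b + m ^ 2 * u := by ring
    rw [this]
  · intro t _ ht
    simp [ht]
  · exact fun h => absurd (Finset.mem_univ _) h

lemma prune (L0 : Finset (ZMod p × ZMod p × ZMod p)) (T : ℕ) (h : T * L0.card < sig L0) :
    ∃ L ⊆ L0, L.Nonempty ∧ ∀ r ∈ L, T ≤ ∑ τ, (rho L (r.2.1 - r.1 * r.2.2 + r.1 ^ 2 * τ)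
      (r.2.2 - r.1 * τ) τ / 2 - 2) := by
  obtain ⟨L, hL, hmax⟩ := Finset.exists_max_image L0.powerset
    (fun L => (sig L : ℤ) - T * L.card) ⟨L0, Finset.mem_powerset_self _⟩
  have h0 := hmax L0 (Finset.mem_powerset_self _)
  rw [Finset.mem_powerset] at hL
  refine ⟨L, hL, ?_, ?_⟩
  · rw [Finset.nonempty_iff_ne_empty]
    rintro rfl
    have hs : sig (∅ : Finset (ZMod p × ZMod p × ZMod p)) = 0 := by
      simp [sig, rho, psi]
    rw [hs] at h0
    zify at h
    simp at h0
    linarith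
  · rintro ⟨m, a, b⟩ hr
    have h1 := hmax (L.erase (m, a, b)) (Finset.mem_powerset.mpr ((Finset.erase_subset _ _).trans hL))
    have h2 := sig_erase L m a b
    have h3 := Finset.card_erase_add_one hr
    simp only at h1 ⊢
    have h4 : (L.card : ℤ) = (L.erase (m, a, b)).card + 1 := by exact_mod_cast h3.symm
    rw [h4] at h1
    zify at h2 ⊢
    nlinarith

lemma core2 (hp2 : p ≠ 2) (G Q : Finset (ZMod p)) (hG : 0 < G.card) (hQ : 0 < Q.card)
    (d : ℕ) (hd : 3 * (G.card * Q.card ^ 2) ≤ (d + 1) ^ 2) (hdp : 3 * d + 2 < p) :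
    sig (G ×ˢ Q ×ˢ Q) ≤ (2 * (3 * d + 2) + G.card) * (G.card * Q.card ^ 2) := by
  by_contra hcon
  push Not at hcon
  have hcard : (G ×ˢ Q ×ˢ Q).card = G.card * Q.card ^ 2 := by
    rw [Finset.card_product, Finset.card_product]; ring
  rw [← hcard] at hcon
  obtain ⟨L, hL, hne, hT⟩ := prune _ _ hcon
  refine core1 hp2 L hne (3 * d) G.card hdp ?_ ?_ hT
  · intro s t u
    refine Finset.card_le_card (fun m hm => ?_)
    have := hL (Finset.mem_filter.mp hm).2
    exact (Finset.mem_product.mp this).1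
  · apply exists_poly
    have h1 : L.card ≤ G.card * Q.card ^ 2 := hcard ▸ Finset.card_le_card hL
    have h2 : 0 < L.card := hne.card_pos
    calc L.card * (3 * d + 1) < L.card * (3 * (d + 1)) := by
          apply Nat.mul_lt_mul_of_pos_left _ h2; omega
      _ = 3 * L.card * (d + 1) := by ring
      _ ≤ (d + 1) ^ 2 * (d + 1) := by
          apply Nat.mul_le_mul_right; omega
      _ = (d + 1) ^ 3 := by ring

/-- number of representations as a difference -/
def hh (Q : Finset (ZMod p)) (t : ZMod p) : ℕ := (Q.filter (fun s => s + t ∈ Q)).card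

lemma hh_le (Q : Finset (ZMod p)) (t : ZMod p) : hh Q t ≤ Q.card :=
  Finset.card_le_card (Finset.filter_subset _ _)

lemma hh_sum (Q : Finset (ZMod p)) : ∑ t, hh Q t = Q.card ^ 2 := by
  unfold hh
  simp only [Finset.card_filter]
  rw [Finset.sum_comm]
  have : ∀ s ∈ Q, (∑ t : ZMod p, if s + t ∈ Q then 1 else 0) = Q.card := by
    intro s _
    have e := Equiv.sum_comp (Equiv.addLeft s) (fun x => if x ∈ Q then (1 : ℕ) else 0)
    exact e.trans (by simp)
  rw [Finset.sum_congr rfl this]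
  simp [sq]

lemma rho_sum (G Q : Finset (ZMod p)) (hG0 : ∀ g ∈ G, g ≠ 0)
    (hinv : ∀ g ∈ G, ∀ x, g * x ∈ Q ↔ x ∈ Q) (t : ZMod p) :
    ∑ u ∈ Q, ∑ s ∈ Q, rho (G ×ˢ Q ×ˢ Q) s t u = G.card * hh Q t ^ 2 := by
  have e1 : ∀ s u, rho (G ×ˢ Q ×ˢ Q) s t u =
      ∑ g ∈ G, (if s + g * t ∈ Q then 1 else 0) * (if t + g * u ∈ Q then 1 else 0) := by
    intro s u
    have : (univ.filter (fun m : ZMod p => (m, s + m * t, t + m * u) ∈ G ×ˢ Q ×ˢ Q)) =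
      G.filter (fun m => s + m * t ∈ Q ∧ t + m * u ∈ Q) := by
      ext m; simp [Finset.mem_product]
    unfold rho
    rw [this, Finset.card_filter]
    refine Finset.sum_congr rfl (fun g _ => ?_)
    split_ifs <;> simp_all
  simp only [e1]
  have e2 : ∑ u ∈ Q, ∑ s ∈ Q, ∑ g ∈ G, ((if s + g * t ∈ Q then 1 else 0) * (if t + g * u ∈ Q then 1 else 0) : ℕ)
      = ∑ g ∈ G, (∑ s ∈ Q, if s + g * t ∈ Q then 1 else 0) * (∑ u ∈ Q, if t + g * u ∈ Q then 1 else 0) := by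
    simp only [Finset.sum_mul_sum]
    calc _ = ∑ u ∈ Q, ∑ g ∈ G, ∑ s ∈ Q, ((if s + g * t ∈ Q then 1 else 0) * (if t + g * u ∈ Q then 1 else 0) : ℕ) :=
          Finset.sum_congr rfl (fun u _ => Finset.sum_comm)
      _ = ∑ g ∈ G, ∑ u ∈ Q, ∑ s ∈ Q, ((if s + g * t ∈ Q then 1 else 0) * (if t + g * u ∈ Q then 1 else 0) : ℕ) :=
          Finset.sum_comm
      _ = _ := Finset.sum_congr rfl (fun g _ => Finset.sum_comm)
  rw [e2, Finset.sum_congr rfl (g := fun _ => hh Q t ^ 2)]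
  · simp
  intro g hg
  have hg0 := hG0 g hg
  have f1 : (∑ s ∈ Q, if s + g * t ∈ Q then 1 else 0) = hh Q t := by
    unfold hh
    rw [Finset.card_filter]
    refine (Finset.sum_bij (fun s _ => g * s) (fun s hs => (hinv g hg s).mpr hs)
      (fun a _ b _ hab => mul_left_cancel₀ hg0 hab) (fun b hb => ⟨g⁻¹ * b, ?_, ?_⟩) ?_).symm
    · rw [← hinv g hg, mul_inv_cancel_left₀ hg0]; exact hb
    · rw [mul_inv_cancel_left₀ hg0]
    · intro s _
      rw [← mul_add, if_congr (hinv g hg _) rfl rfl]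
  have f2 : (∑ u ∈ Q, if t + g * u ∈ Q then 1 else 0) = hh Q t := by
    unfold hh
    rw [Finset.card_filter]
    refine (Finset.sum_bij (fun s _ => g * s) (fun s hs => (hinv g hg s).mpr hs)
      (fun a _ b _ hab => mul_left_cancel₀ hg0 hab) (fun b hb => ⟨g⁻¹ * b, ?_, ?_⟩) ?_)
    · rw [← hinv g hg, mul_inv_cancel_left₀ hg0]; exact hb
    · rw [mul_inv_cancel_left₀ hg0]
    · intro s _
      rw [add_comm]
  rw [f1, f2, sq]

set_option maxHeartbeats 1000000 in
lemma core3 (hp2 : p ≠ 2) (G Q : Finset (ZMod p)) (hG : 0 < G.card) (hQ : 0 < Q.card)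
    (hG0 : ∀ g ∈ G, g ≠ 0) (hinv : ∀ g ∈ G, ∀ x, g * x ∈ Q ↔ x ∈ Q)
    (hnq : √(G.card : ℝ) ≤ Q.card) (hdp : 6 * √(G.card : ℝ) * Q.card + 2 < p) :
    ∑ t, (hh Q t : ℝ) ^ 4 ≤ 288 * (Q.card : ℝ) ^ 5 / √(G.card : ℝ) := by
  set n : ℝ := (G.card : ℝ) with hn
  set q : ℝ := (Q.card : ℝ) with hq
  have hn1 : 1 ≤ n := by rw [hn]; exact_mod_cast hG
  have hq1 : 1 ≤ q := by rw [hq]; exact_mod_cast hQ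
  have hs1 : 1 ≤ √n := Real.one_le_sqrt.mpr hn1
  have hsn : √n ^ 2 = n := Real.sq_sqrt (by linarith)
  obtain ⟨d, hd, hd2⟩ : ∃ d : ℕ, 3 * (G.card * Q.card ^ 2) ≤ (d + 1) ^ 2 ∧ d ^ 2 ≤ 3 * (G.card * Q.card ^ 2) :=
    ⟨Nat.sqrt (3 * (G.card * Q.card ^ 2)), (Nat.lt_succ_sqrt' _).le, Nat.sqrt_le' _⟩
  have hd3 : (d : ℝ) ≤ 2 * √n * q := by
    have : (d : ℝ) ^ 2 ≤ 3 * (n * q ^ 2) := by rw [hn, hq]; exact_mod_cast hd2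
    apply le_of_sq_le_sq _ (by positivity)
    rw [← hsn] at this
    nlinarith [sq_nonneg (√n * q)]
  have hdp' : 3 * d + 2 < p := by
    have : (3 * d + 2 : ℝ) < p := by nlinarith
    exact_mod_cast this
  have hsig := core2 hp2 G Q hG hQ d hd hdp'
  have hsigR : (sig (G ×ˢ Q ×ˢ Q) : ℝ) ≤ (2 * (3 * d + 2) + n) * (n * q ^ 2) := by
    rw [hn, hq]; exact_mod_cast hsig
  have hpt : ∀ t, n ^ 2 * (hh Q t : ℝ) ^ 4 / (16 * q ^ 2) ≤
      (∑ u, ∑ s, psi (rho (G ×ˢ Q ×ˢ Q) s t u) : ℕ) + n * (q * hh Q t) := by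
    intro t
    set h : ℝ := (hh Q t : ℝ) with hh'
    have hhq : h ≤ q := by rw [hh', hq]; exact_mod_cast hh_le Q t
    have hh0 : 0 ≤ h := by rw [hh']; positivity
    rcases le_or_gt (208 * q ^ 4) (n ^ 2 * h ^ 4) with hc | hc
    · have h1 : (∑ u ∈ Q, ∑ s ∈ Q, psi (rho (G ×ˢ Q ×ˢ Q) s t u) : ℕ) ≤
          ∑ u, ∑ s, psi (rho (G ×ˢ Q ×ˢ Q) s t u) := by
        refine (Finset.sum_le_sum_of_subset (Finset.subset_univ _)).trans
          (Finset.sum_le_sum fun u _ => Finset.sum_le_sum_of_subset (Finset.subset_univ _))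
      have h1' : ((∑ u ∈ Q, ∑ s ∈ Q, psi (rho (G ×ˢ Q ×ˢ Q) s t u) : ℕ) : ℝ) ≤
          (∑ u, ∑ s, psi (rho (G ×ˢ Q ×ˢ Q) s t u) : ℕ) := by exact_mod_cast h1
      have h2 : ∑ u ∈ Q, ∑ s ∈ Q, ((rho (G ×ˢ Q ×ˢ Q) s t u : ℝ) ^ 2 / 8 - 13) ≤
          ((∑ u ∈ Q, ∑ s ∈ Q, psi (rho (G ×ˢ Q ×ˢ Q) s t u) : ℕ) : ℝ) := by
        push_cast
        exact Finset.sum_le_sum fun u _ => Finset.sum_le_sum fun s _ => psi_lower _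
      have h3 : ∑ u ∈ Q, ∑ s ∈ Q, ((rho (G ×ˢ Q ×ˢ Q) s t u : ℝ) ^ 2 / 8 - 13) =
          (∑ u ∈ Q, ∑ s ∈ Q, (rho (G ×ˢ Q ×ˢ Q) s t u : ℝ) ^ 2) / 8 - 13 * q ^ 2 := by
        simp only [Finset.sum_sub_distrib, Finset.sum_div, Finset.sum_const, nsmul_eq_mul]
        rw [← hq]; ring
      have h4 : (∑ u ∈ Q, ∑ s ∈ Q, (rho (G ×ˢ Q ×ˢ Q) s t u : ℝ)) = n * h ^ 2 := by
        have := rho_sum G Q hG0 hinv t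
        rw [hn, hh']; exact_mod_cast this
      have h5 : (n * h ^ 2) ^ 2 ≤ q ^ 2 * ∑ u ∈ Q, ∑ s ∈ Q, (rho (G ×ˢ Q ×ˢ Q) s t u : ℝ) ^ 2 := by
        rw [← h4, ← Finset.sum_product' Q Q, ← Finset.sum_product' Q Q]
        have := sq_sum_le_card_mul_sum_sq (s := Q ×ˢ Q)
          (f := fun x => (rho (G ×ˢ Q ×ˢ Q) x.2 t x.1 : ℝ))
        rw [Finset.card_product] at this
        push_cast at this
        rw [← hq, ← sq] at this
        exact this
      have h6 : n ^ 2 * h ^ 4 / q ^ 2 ≤ ∑ u ∈ Q, ∑ s ∈ Q, (rho (G ×ˢ Q ×ˢ Q) s t u : ℝ) ^ 2 := by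
        rw [div_le_iff₀ (by positivity)]; nlinarith
      have h7 : 208 * q ^ 2 ≤ n ^ 2 * h ^ 4 / q ^ 2 := by
        rw [le_div_iff₀ (by positivity)]; nlinarith
      have h8 : n ^ 2 * h ^ 4 / (16 * q ^ 2) = n ^ 2 * h ^ 4 / q ^ 2 / 16 := by
        field_simp
      have h9 : 0 ≤ n * (q * h) := by positivity
      rw [h8]
      linarith
    · have h1 : n * h ^ 2 ≤ 15 * q ^ 2 := by
        apply le_of_sq_le_sq _ (by positivity)
        nlinarith [sq_nonneg (q ^ 2)]
      have h2 : n ^ 2 * h ^ 4 / (16 * q ^ 2) ≤ n * h ^ 2 := by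
        rw [div_le_iff₀ (by positivity)]
        have : 0 ≤ n * h ^ 2 := by positivity
        nlinarith
      have h3 : n * h ^ 2 ≤ n * (q * h) := by
        apply mul_le_mul_of_nonneg_left _ (by linarith); nlinarith
      have h4 : (0 : ℝ) ≤ (∑ u, ∑ s, psi (rho (G ×ˢ Q ×ˢ Q) s t u) : ℕ) := Nat.cast_nonneg _
      linarith
  have hsumt := Finset.sum_le_sum (fun t (_ : t ∈ (univ : Finset (ZMod p))) => hpt t)
  rw [Finset.sum_add_distrib, ← Nat.cast_sum, ← Finset.mul_sum, ← Finset.mul_sum, ← Finset.sum_div,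
    ← Finset.mul_sum] at hsumt
  have hs : (∑ t, (hh Q t : ℝ)) = q ^ 2 := by rw [hq]; exact_mod_cast hh_sum Q
  rw [hs] at hsumt
  change _ ≤ (sig (G ×ˢ Q ×ˢ Q) : ℝ) + _ at hsumt
  set S := ∑ t, (hh Q t : ℝ) ^ 4 with hS
  rw [div_le_iff₀ (by positivity)] at hsumt
  rw [le_div_iff₀ (by linarith)]
  have hT : 2 * (3 * (d : ℝ) + 2) + n + q ≤ 18 * (√n * q) := by
    have a1 : n ≤ √n * q := by nlinarith
    have a2 : q ≤ √n * q := by nlinarith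
    nlinarith
  have e : n ^ 2 * S ≤ (18 * (√n * q)) * (n * q ^ 2) * (16 * q ^ 2) := by
    refine hsumt.trans (mul_le_mul_of_nonneg_right ?_ (by positivity))
    have : n * (q * q ^ 2) = q * (n * q ^ 2) := by ring
    rw [this]
    calc _ ≤ (2 * (3 * (d : ℝ) + 2) + n) * (n * q ^ 2) + q * (n * q ^ 2) := by linarith
      _ = (2 * (3 * (d : ℝ) + 2) + n + q) * (n * q ^ 2) := by ring
      _ ≤ _ := mul_le_mul_of_nonneg_right hT (by positivity)
  have e2 : (n * √n) * (S * √n) ≤ (n * √n) * (288 * q ^ 5) := by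
    calc (n * √n) * (S * √n) = n * √n ^ 2 * S := by ring
      _ = n ^ 2 * S := by rw [hsn]; ring
      _ ≤ _ := e
      _ = _ := by ring
  exact le_of_mul_le_mul_left e2 (by positivity)
end S3

open Finset

namespace S3
variable {p : ℕ} [hp : Fact p.Prime]

lemma num_final (τ q b δ E1 E2 J L H : ℝ) (hτ : 0 < τ) (hq : 0 < q) (hb : 0 < b) (hδ : 0 < δ)
    (hE1 : 0 < E1) (hE2 : 0 < E2) (hJ : 0 < J) (hL : 1 ≤ L) (hδE : δ * E1 = E2)
    (ha : E2 ≤ τ ^ 2 * q * (4 * J)) (hb4 : δ / 4 ≤ τ)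
    (hcs : (τ * q / 2) ^ 8 ≤ E1 ^ 2 * E2 * H) (hH : H ≤ 288 * q ^ 5 / b ^ 8)
    (hJL : J ≤ 7 / 2 * L) : δ * b ^ 2 ≤ 240 * L := by
  have h1 : (τ * q / 2) ^ 8 ≤ E1 ^ 2 * E2 * (288 * q ^ 5 / b ^ 8) :=
    hcs.trans (mul_le_mul_of_nonneg_left hH (by positivity))
  have h2 : τ ^ 8 * q ^ 3 * b ^ 8 ≤ 73728 * (E1 ^ 2 * E2) := by
    have e : E1 ^ 2 * E2 * (288 * q ^ 5 / b ^ 8) = (E1 ^ 2 * E2 * 288 * q ^ 5) / b ^ 8 := by ring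
    rw [e, le_div_iff₀ (by positivity)] at h1
    have h3 : q ^ 5 * (τ ^ 8 * q ^ 3 * b ^ 8) ≤ q ^ 5 * (73728 * (E1 ^ 2 * E2)) := by
      calc _ = 256 * ((τ * q / 2) ^ 8 * b ^ 8) := by ring
        _ ≤ 256 * (E1 ^ 2 * E2 * 288 * q ^ 5) := by linarith
        _ = _ := by ring
    exact le_of_mul_le_mul_left h3 (by positivity)
  have h3 : E2 ^ 3 * (δ / 4) ^ 2 ≤ (τ ^ 2 * q * (4 * J)) ^ 3 * τ ^ 2 := by gcongr
  have h4 : E2 ^ 3 * (δ / 4) ^ 2 * b ^ 8 ≤ 73728 * (E1 ^ 2 * E2) * (64 * J ^ 3) := by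
    calc _ ≤ (τ ^ 2 * q * (4 * J)) ^ 3 * τ ^ 2 * b ^ 8 := by gcongr
      _ = (τ ^ 8 * q ^ 3 * b ^ 8) * (64 * J ^ 3) := by ring
      _ ≤ _ := by gcongr
  have h5 : (δ * b ^ 2) ^ 4 ≤ 75497472 * J ^ 3 := by
    have : E1 ^ 3 * δ * (δ * b ^ 2) ^ 4 ≤ E1 ^ 3 * δ * (75497472 * J ^ 3) := by
      calc _ = 16 * (E2 ^ 3 * (δ / 4) ^ 2 * b ^ 8) := by rw [← hδE]; ring
        _ ≤ 16 * (73728 * (E1 ^ 2 * E2) * (64 * J ^ 3)) := by linarith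
        _ = _ := by rw [← hδE]; ring
    exact le_of_mul_le_mul_left this (by positivity)
  have h6 : J ^ 3 ≤ (7 / 2 * L) ^ 3 := by gcongr
  have h7 : (δ * b ^ 2) ^ 4 ≤ (240 * L) ^ 4 := by
    have : L ^ 3 ≤ L ^ 4 := pow_le_pow_right₀ hL (by norm_num)
    have h4p : 0 ≤ L ^ 4 := by positivity
    have e1 : (7 / 2 * L) ^ 3 = 343 / 8 * L ^ 3 := by ring
    have e2 : (240 * L) ^ 4 = 3317760000 * L ^ 4 := by ring
    rw [e2]
    rw [e1] at h6
    linarith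
  exact le_of_pow_le_pow_left₀ (by norm_num) (by positivity) h7

set_option maxHeartbeats 1000000 in
lemma main_norm (hp2 : p ≠ 2) (G : Finset (ZMod p)) (hG : 0 < G.card) (hG0 : ∀ γ ∈ G, γ ≠ 0)
    (g : ZMod p → ℝ) (hinv : ∀ γ ∈ G, ∀ x, g (γ * x) = g x) (M : ℕ) (hM : 4 ≤ M) (hMe : Even M)
    (g0 : g 0 = 1) (g1 : ∀ x, |g x| ≤ 1)
    (hPD : ∀ Q : Finset (ZMod p), (∑ x ∈ Q, g x ^ M) ^ 2 ≤ ∑ x ∈ Q, ∑ y ∈ Q, g (y - x) ^ M)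
    (h6 : (G.card : ℝ) * ∑ x, g x ^ 2 ≤ p) (Λ : ℝ) (hΛ1 : 1 ≤ Λ)
    (hΛ : ∀ x, x ≠ 0 → (G.card : ℝ) * |g x| ≤ Λ ^ 2) (b : ℝ) (hb : 0 < b)
    (hbn : b ^ 16 = G.card) :
    ∑ x, (g x ^ M) ^ 2 ≤ 240 * (1 + Real.logb 2 Λ) * (∑ x, g x ^ M) * (1 / b ^ 2) ∨
      ∑ x, (g x ^ M) ^ 2 ≤ 2 := by
  by_cases hE2 : ∑ x, (g x ^ M) ^ 2 ≤ 2
  · exact Or.inr hE2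
  left
  push Not at hE2
  set φ : ZMod p → ℝ := fun x => g x ^ M with hφ
  have hφa : ∀ x, φ x = |g x| ^ M := fun x => (hMe.pow_abs (g x)).symm
  have hφ0 : ∀ x, 0 ≤ φ x := fun x => hMe.pow_nonneg _
  have hφ1 : ∀ x, φ x ≤ 1 := fun x => by rw [hφa]; exact pow_le_one₀ (abs_nonneg _) (g1 x)
  have hφz : φ 0 = 1 := by simp [hφ, g0]
  set E1 := ∑ x, φ x with hE1d
  set E2 := ∑ x, φ x ^ 2 with hE2d
  change E2 ≤ 240 * (1 + Real.logb 2 Λ) * E1 * (1 / b ^ 2)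
  change 2 < E2 at hE2
  have hE21 : E2 ≤ E1 := Finset.sum_le_sum (fun x _ => by
    have := hφ0 x; have := hφ1 x; nlinarith)
  have hE1p : 0 < E1 := by linarith
  set L := 1 + Real.logb 2 Λ with hLd
  have hL : 1 ≤ L := by
    have := Real.logb_nonneg (b := 2) (by norm_num) hΛ1
    linarith
  set n : ℝ := (G.card : ℝ) with hn
  have hn1 : 1 ≤ n := by rw [hn]; exact_mod_cast hG
  have hb1 : 1 ≤ b := by
    by_contra h
    push Not at h
    have := pow_lt_one₀ hb.le h (n := 16) (by norm_num)
    linarith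
  have hb2 : 1 ≤ b ^ 2 := one_le_pow₀ hb1
  have hLE : 0 ≤ L * E1 := by positivity
  -- small b
  by_cases hbs : b ^ 2 ≤ 240
  · have : E1 ≤ 240 * L * E1 * (1 / b ^ 2) := by
      rw [mul_one_div, le_div_iff₀ (by positivity)]
      nlinarith
    linarith
  push Not at hbs
  -- off zero sum
  have hoff : E2 / 2 ≤ ∑ x ∈ univ.erase 0, φ x ^ 2 := by
    have := Finset.add_sum_erase univ (fun x => φ x ^ 2) (Finset.mem_univ (0 : ZMod p))
    simp only [hφz] at this
    linarith
  by_cases hΛs : Λ ^ 2 ≤ b ^ 8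
  · have hsm : ∀ x ∈ univ.erase (0 : ZMod p), φ x ^ 2 ≤ (1 / b ^ 2) * φ x := by
      intro x hx
      have h1 := (hΛ x (Finset.ne_of_mem_erase hx)).trans hΛs
      rw [← hbn] at h1
      have h2 : |g x| ≤ 1 / b ^ 2 := by
        rw [le_div_iff₀ (by positivity)]
        have h3 : b ^ 8 * (b ^ 8 * |g x|) ≤ b ^ 8 * 1 := by
          calc _ = b ^ 16 * |g x| := by ring
            _ ≤ _ := by linarith
        have h4 := le_of_mul_le_mul_left h3 (by positivity)
        have h5 : b ^ 2 ≤ b ^ 8 := pow_le_pow_right₀ hb1 (by norm_num)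
        nlinarith [abs_nonneg (g x)]
      have h3 : φ x ≤ |g x| := by
        rw [hφa]
        calc |g x| ^ M ≤ |g x| ^ 1 := pow_le_pow_of_le_one (abs_nonneg _) (g1 x) (by omega)
          _ = _ := pow_one _
      rw [sq]
      exact mul_le_mul_of_nonneg_right (h3.trans h2) (hφ0 x)
    have h1 := Finset.sum_le_sum hsm
    rw [← Finset.mul_sum] at h1
    have h2 : ∑ x ∈ univ.erase (0 : ZMod p), φ x ≤ E1 :=
      Finset.sum_le_sum_of_subset_of_nonneg (Finset.subset_univ _) (fun x _ _ => hφ0 x)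
    have hbi : 0 ≤ 1 / b ^ 2 := by positivity
    have h3 : (1 / b ^ 2) * ∑ x ∈ univ.erase (0 : ZMod p), φ x ≤ (1 / b ^ 2) * E1 := by gcongr
    have h4 : 0 ≤ (1 / b ^ 2) * E1 := by positivity
    have h5 : (1 / b ^ 2) * E1 ≤ L * ((1 / b ^ 2) * E1) := by nlinarith
    have e : 240 * L * E1 * (1 / b ^ 2) = 240 * (L * ((1 / b ^ 2) * E1)) := by ring
    rw [e]
    linarith
  push Not at hΛs
  set δ := E2 / E1 with hδd
  have hδE : δ * E1 = E2 := by rw [hδd]; field_simp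
  have hδp : 0 < δ := by rw [hδd]; apply div_pos <;> linarith
  have hδ1 : δ ≤ 1 := by rw [hδd, div_le_one hE1p]; exact hE21
  suffices hs : δ * b ^ 2 ≤ 240 * L by
    rw [mul_one_div, le_div_iff₀ (by positivity), ← hδE]
    nlinarith
  by_cases hδb : δ * b ^ 2 ≤ 1
  · linarith
  push Not at hδb
  -- dyadic level
  obtain ⟨N, hN1, hN2⟩ := exists_nat_pow_near (x := 4 / δ) (y := 2)
    (by rw [le_div_iff₀ hδp]; linarith) (by norm_num)
  have hJL : ((N + 1 : ℕ) : ℝ) ≤ 7 / 2 * L := by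
    have e1 : (2 : ℝ) ^ N ≤ 4 * b ^ 2 := by
      refine hN1.trans ?_
      rw [div_le_iff₀ hδp]; nlinarith
    have e2 : b ^ 2 ^ 2 ≤ Λ := by
      have : (b ^ 4) ^ 2 < Λ ^ 2 := by calc (b ^ 4) ^ 2 = b ^ 8 := by ring
                                      _ < _ := hΛs
      have := lt_of_pow_lt_pow_left₀ 2 (by linarith) this
      norm_num
      exact this.le
    have e3 : ((2 : ℝ) ^ N) ^ 2 ≤ 2 ^ 4 * Λ := by
      calc ((2 : ℝ) ^ N) ^ 2 ≤ (4 * b ^ 2) ^ 2 := by gcongr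
        _ = 2 ^ 4 * b ^ 2 ^ 2 := by norm_num; ring
        _ ≤ _ := by gcongr
    have e4 : (2 * N : ℝ) ≤ 4 + Real.logb 2 Λ := by
      have := Real.logb_le_logb_of_le (b := 2) (by norm_num) (by positivity) e3
      rw [Real.logb_mul (by norm_num) (by linarith), Real.logb_pow, Real.logb_pow, Real.logb_pow,
        Real.logb_self_eq_one (by norm_num)] at this
      push_cast at this
      linarith
    push_cast
    linarith
  let Qf : ℕ → Finset (ZMod p) := fun j =>
    univ.filter (fun x => x ≠ 0 ∧ (1 / 2 : ℝ) ^ (j + 1) < φ x ∧ φ x ≤ (1 / 2) ^ j)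
  have hbig : E2 / 4 ≤ ∑ x ∈ (univ.erase 0).filter (fun x => δ / 4 < φ x), φ x ^ 2 := by
    have h1 := Finset.sum_filter_add_sum_filter_not (univ.erase (0 : ZMod p)) (fun x => δ / 4 < φ x)
      (fun x => φ x ^ 2)
    have h2 : ∑ x ∈ (univ.erase (0 : ZMod p)).filter (fun x => ¬ δ / 4 < φ x), φ x ^ 2 ≤ δ / 4 * E1 := by
      calc _ ≤ ∑ x ∈ (univ.erase (0 : ZMod p)).filter (fun x => ¬ δ / 4 < φ x), δ / 4 * φ x := by
            refine Finset.sum_le_sum (fun x hx => ?_)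
            have := (Finset.mem_filter.mp hx).2
            rw [sq]
            exact mul_le_mul_of_nonneg_right (not_lt.mp this) (hφ0 x)
        _ ≤ ∑ x, δ / 4 * φ x := Finset.sum_le_sum_of_subset_of_nonneg (Finset.subset_univ _)
            (fun x _ _ => mul_nonneg (by linarith) (hφ0 x))
        _ = _ := by rw [Finset.mul_sum]
    have h3 : δ / 4 * E1 = E2 / 4 := by rw [← hδE]; ring
    linarith
  have hcover : ∑ x ∈ (univ.erase 0).filter (fun x => δ / 4 < φ x), φ x ^ 2 ≤
      ∑ j ∈ range (N + 1), ∑ x ∈ Qf j, φ x ^ 2 := by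
    have hsub : (univ.erase 0).filter (fun x => δ / 4 < φ x) ⊆ (range (N + 1)).biUnion Qf := by
      intro x hx
      rw [Finset.mem_filter] at hx
      obtain ⟨j, hj1, hj2⟩ := exists_nat_pow_near_of_lt_one (x := φ x) (y := 1 / 2) (by linarith)
        (hφ1 x) (by norm_num) (by norm_num)
      rw [Finset.mem_biUnion]
      refine ⟨j, ?_, Finset.mem_filter.mpr ⟨Finset.mem_univ _, Finset.ne_of_mem_erase hx.1, hj1, hj2⟩⟩
      rw [Finset.mem_range]
      by_contra hcon
      push Not at hcon
      have h1 : (1 / 2 : ℝ) ^ j ≤ (1 / 2) ^ (N + 1) :=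
        pow_le_pow_of_le_one (by norm_num) (by norm_num) hcon
      have h2 : (1 / 2 : ℝ) ^ (N + 1) < δ / 4 := by
        rw [one_div, inv_pow, inv_lt_comm₀ (by positivity) (by positivity), inv_div]
        exact hN2
      linarith
    refine (Finset.sum_le_sum_of_subset_of_nonneg hsub (fun x _ _ => sq_nonneg _)).trans ?_
    refine le_of_eq (Finset.sum_biUnion ?_)
    intro i _ k _ hik
    rw [Function.onFun, Finset.disjoint_left]
    intro x hx1 hx2
    have h1 := (Finset.mem_filter.mp hx1).2
    have h2 := (Finset.mem_filter.mp hx2).2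
    rcases lt_or_gt_of_ne hik with hlt | hlt
    · have h3 : (1 / 2 : ℝ) ^ k ≤ (1 / 2) ^ (i + 1) :=
        pow_le_pow_of_le_one (by norm_num) (by norm_num) hlt
      linarith [h1.2.1, h2.2.2]
    · have h3 : (1 / 2 : ℝ) ^ i ≤ (1 / 2) ^ (k + 1) :=
        pow_le_pow_of_le_one (by norm_num) (by norm_num) hlt
      linarith [h1.2.2, h2.2.1]
  obtain ⟨j, hj, hjb⟩ : ∃ j ∈ range (N + 1), E2 / (4 * ((N + 1 : ℕ) : ℝ)) ≤ ∑ x ∈ Qf j, φ x ^ 2 := by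
    by_contra hcon
    push Not at hcon
    have h1 := Finset.sum_lt_sum_of_nonempty (Finset.nonempty_range_add_one (n := N)) hcon
    rw [Finset.sum_const, Finset.card_range, nsmul_eq_mul] at h1
    have h2 : ((N + 1 : ℕ) : ℝ) * (E2 / (4 * ((N + 1 : ℕ) : ℝ))) = E2 / 4 := by
      have : ((N + 1 : ℕ) : ℝ) ≠ 0 := by positivity
      field_simp
    linarith
  set Q := Qf j with hQd
  set τ : ℝ := (1 / 2) ^ j with hτd
  have hQm : ∀ x, x ∈ Q ↔ x ≠ 0 ∧ τ / 2 < φ x ∧ φ x ≤ τ := by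
    intro x
    have e : (1 / 2 : ℝ) ^ (j + 1) = τ / 2 := by rw [pow_succ, hτd]; ring
    rw [hQd]
    simp only [Qf, Finset.mem_filter, Finset.mem_univ, true_and]
    rw [e]
  have hτp : 0 < τ := by positivity
  set q : ℝ := (Q.card : ℝ) with hq
  have hE2p : 0 < E2 := by linarith
  have hJp : (0 : ℝ) < ((N + 1 : ℕ) : ℝ) := by positivity
  have ha : E2 ≤ τ ^ 2 * q * (4 * ((N + 1 : ℕ) : ℝ)) := by
    rw [div_le_iff₀ (by positivity)] at hjb
    refine hjb.trans (mul_le_mul_of_nonneg_right ?_ (by positivity))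
    calc ∑ x ∈ Q, φ x ^ 2 ≤ ∑ x ∈ Q, τ ^ 2 := Finset.sum_le_sum (fun x hx => by
          have := ((hQm x).mp hx).2.2
          have := hφ0 x
          gcongr)
      _ = _ := by rw [Finset.sum_const, nsmul_eq_mul]; ring
  have hb4 : δ / 4 ≤ τ := by
    have h1 : (1 / 2 : ℝ) ^ N ≤ τ :=
      pow_le_pow_of_le_one (by norm_num) (by norm_num) (by rw [Finset.mem_range] at hj; omega)
    refine le_trans ?_ h1
    rw [one_div, inv_pow, le_inv_comm₀ (by positivity) (by positivity), inv_div]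
    exact hN1
  have hQne : Q.Nonempty := by
    by_contra h
    rw [Finset.not_nonempty_iff_eq_empty] at h
    rw [h] at hq
    simp at hq
    rw [hq] at ha
    simp at ha
    linarith
  have hq1 : 0 < Q.card := hQne.card_pos
  have hq1' : 0 < q := by rw [hq]; exact_mod_cast hq1
  have hφinv : ∀ γ ∈ G, ∀ x, φ (γ * x) = φ x := fun γ hγ x => by simp only [hφ]; rw [hinv γ hγ x]
  have hQinv : ∀ γ ∈ G, ∀ x, γ * x ∈ Q ↔ x ∈ Q := by
    intro γ hγ x
    rw [hQm, hQm, hφinv γ hγ x]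
    simp [hG0 γ hγ]
  have hGQ : G.card ≤ Q.card := by
    obtain ⟨x, hx⟩ := hQne
    have hx0 := ((hQm x).mp hx).1
    refine Finset.card_le_card_of_injOn (fun γ => γ * x) (fun γ hγ => ?_) ?_
    · exact (hQinv γ hγ x).mpr hx
    · intro a _ c _ hac
      exact mul_right_cancel₀ hx0 hac
  have hsq : √n = b ^ 8 := by
    rw [← hbn, show b ^ 16 = (b ^ 8) ^ 2 by ring]
    exact Real.sqrt_sq (by positivity)
  have hnq : √n ≤ q := by
    have h1 : n ≤ q := by rw [hn, hq]; exact_mod_cast hGQ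
    have h2 : b ^ 8 ≤ b ^ 16 := pow_le_pow_right₀ hb1 (by norm_num)
    rw [hsq]; linarith
  have hdeg : 6 * √n * q + 2 < p := by
    have hg2 : ∀ x ∈ Q, 1 / (3 * b) ≤ g x ^ 2 := by
      intro x hx
      have h1 := ((hQm x).mp hx).2.1
      have h2 : φ x ≤ |g x| ^ 4 := by
        rw [hφa]; exact pow_le_pow_of_le_one (abs_nonneg _) (g1 x) hM
      have h3 : |g x| ^ 4 = (g x ^ 2) ^ 2 := by rw [← sq_abs (g x)]; ring
      have h4 : δ / 8 ≤ (g x ^ 2) ^ 2 := by rw [← h3]; linarith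
      apply le_of_sq_le_sq _ (sq_nonneg _)
      have h5 : (1 / (3 * b)) ^ 2 = 1 / (9 * b ^ 2) := by field_simp; norm_num
      rw [h5, div_le_iff₀ (by positivity)]
      nlinarith
    have h1 : q * (1 / (3 * b)) ≤ ∑ x, g x ^ 2 := by
      calc q * (1 / (3 * b)) = ∑ x ∈ Q, 1 / (3 * b) := by rw [Finset.sum_const, nsmul_eq_mul]
        _ ≤ ∑ x ∈ Q, g x ^ 2 := Finset.sum_le_sum hg2
        _ ≤ _ := Finset.sum_le_sum_of_subset_of_nonneg (Finset.subset_univ _) (fun x _ _ => sq_nonneg _)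
    have h2 : b ^ 16 * (q * (1 / (3 * b))) ≤ p := by
      rw [hbn]
      exact (mul_le_mul_of_nonneg_left h1 (by linarith)).trans h6
    have h3 : b ^ 15 * q ≤ 3 * p := by
      have e : b ^ 16 * (q * (1 / (3 * b))) = b ^ 15 * q / 3 := by field_simp
      rw [e] at h2; linarith
    have h4 : 240 ≤ b ^ 7 := by
      have : b ^ 2 ≤ b ^ 7 := pow_le_pow_right₀ hb1 (by norm_num)
      linarith
    have h5 : 240 * (b ^ 8 * q) ≤ b ^ 15 * q := by
      calc 240 * (b ^ 8 * q) ≤ b ^ 7 * (b ^ 8 * q) := by gcongr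
        _ = _ := by ring
    have h8 : 240 ≤ b ^ 8 := by
      have : b ^ 2 ≤ b ^ 8 := pow_le_pow_right₀ hb1 (by norm_num)
      linarith
    have hq1'' : 1 ≤ q := by rw [hq]; exact_mod_cast hq1
    rw [hsq]
    nlinarith
  have hH := core3 hp2 G Q hG hq1 hG0 hQinv hnq hdeg
  rw [← hn, ← hq, hsq] at hH
  refine num_final τ q b δ E1 E2 _ L _ hτp hq1' hb hδp hE1p hE2p hJp hL hδE ha hb4 ?_ hH hJL
  -- Cauchy-Schwarz
  have hre : ∑ x ∈ Q, ∑ y ∈ Q, φ (y - x) = ∑ t, φ t * hh Q t := by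
    have e1 : ∀ x ∈ Q, ∑ y ∈ Q, φ (y - x) = ∑ t, φ t * (if x + t ∈ Q then 1 else 0) := by
      intro x _
      have h1 : ∑ y ∈ Q, φ (y - x) = ∑ y, (if y ∈ Q then φ (y - x) else 0) := by
        rw [← Finset.sum_filter]; congr 1; ext; simp
      rw [h1]
      have e := Equiv.sum_comp (Equiv.addLeft x) (fun y => if y ∈ Q then φ (y - x) else 0)
      rw [← e]
      refine Finset.sum_congr rfl (fun t _ => ?_)
      simp
    rw [Finset.sum_congr rfl e1, Finset.sum_comm]
    refine Finset.sum_congr rfl (fun t _ => ?_)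
    rw [← Finset.mul_sum]
    unfold hh
    rw [Finset.card_filter]
    push_cast
    rfl
  have hpd := hPD Q
  change (∑ x ∈ Q, φ x) ^ 2 ≤ ∑ x ∈ Q, ∑ y ∈ Q, φ (y - x) at hpd
  rw [hre] at hpd
  have c0 : τ * q / 2 ≤ ∑ x ∈ Q, φ x := by
    calc τ * q / 2 = ∑ x ∈ Q, τ / 2 := by rw [Finset.sum_const, nsmul_eq_mul]; ring
      _ ≤ _ := Finset.sum_le_sum (fun x hx => ((hQm x).mp hx).2.1.le)
  have c1 : (τ * q / 2) ^ 2 ≤ ∑ t, φ t * hh Q t := le_trans (by gcongr) hpd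
  have c2 : (∑ t, φ t * hh Q t) ^ 2 ≤ E1 * ∑ t, φ t * (hh Q t : ℝ) ^ 2 := by
    have := Finset.sum_mul_sq_le_sq_mul_sq univ (fun t => √(φ t)) (fun t => √(φ t) * (hh Q t : ℝ))
    have e1 : ∀ t, √(φ t) * (√(φ t) * (hh Q t : ℝ)) = φ t * hh Q t := fun t => by
      rw [← mul_assoc, Real.mul_self_sqrt (hφ0 t)]
    have e2 : ∀ t, √(φ t) ^ 2 = φ t := fun t => Real.sq_sqrt (hφ0 t)
    simp only [e1, mul_pow, e2] at this
    exact this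
  have c3 : (∑ t, φ t * (hh Q t : ℝ) ^ 2) ^ 2 ≤ E2 * ∑ t, (hh Q t : ℝ) ^ 4 := by
    have := Finset.sum_mul_sq_le_sq_mul_sq univ φ (fun t => (hh Q t : ℝ) ^ 2)
    have e : ∀ t, ((hh Q t : ℝ) ^ 2) ^ 2 = (hh Q t : ℝ) ^ 4 := fun t => by ring
    simp only [e] at this
    exact this
  have n1 : 0 ≤ ∑ t, φ t * (hh Q t : ℝ) := Finset.sum_nonneg (fun t _ => mul_nonneg (hφ0 t) (by positivity))
  calc (τ * q / 2) ^ 8 = (((τ * q / 2) ^ 2) ^ 2) ^ 2 := by ring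
    _ ≤ ((∑ t, φ t * (hh Q t : ℝ)) ^ 2) ^ 2 := by gcongr
    _ ≤ (E1 * ∑ t, φ t * (hh Q t : ℝ) ^ 2) ^ 2 := by gcongr
    _ = E1 ^ 2 * (∑ t, φ t * (hh Q t : ℝ) ^ 2) ^ 2 := by ring
    _ ≤ E1 ^ 2 * (E2 * ∑ t, (hh Q t : ℝ) ^ 4) := by gcongr
    _ = _ := by ring
end S3

namespace S3
variable {p : ℕ} [hp : Fact p.Prime]

lemma corr_zero (f : ZMod p → ℝ) : corr p f 0 = ∑ x, f x ^ 2 := by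
  unfold corr; exact Finset.sum_congr rfl (fun x _ => by rw [add_zero, sq])

lemma corr_shift (f : ZMod p → ℝ) (x y : ZMod p) :
    corr p f (y - x) = ∑ z, f (z + x) * f (z + y) := by
  unfold corr
  rw [← Equiv.sum_comp (Equiv.addRight x) (fun z => f z * f (z + (y - x)))]
  refine Finset.sum_congr rfl (fun z _ => ?_)
  simp only [Equiv.coe_addRight]
  congr 2; ring

lemma corr_abs_le (f : ZMod p → ℝ) (x : ZMod p) : |corr p f x| ≤ ∑ x, f x ^ 2 := by
  apply abs_le_of_sq_le_sq _ (Finset.sum_nonneg fun x _ => sq_nonneg _)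
  have h := Finset.sum_mul_sq_le_sq_mul_sq univ f (fun y => f (y + x))
  have e := Equiv.sum_comp (Equiv.addRight x) (fun z => f z ^ 2)
  simp only [Equiv.coe_addRight] at e
  rw [e] at h
  rw [sq (∑ x, f x ^ 2)]
  exact h

lemma corr_sum (f : ZMod p → ℝ) : ∑ x, corr p f x = (∑ x, f x) ^ 2 := by
  unfold corr
  rw [Finset.sum_comm, sq, Finset.sum_mul]
  refine Finset.sum_congr rfl (fun y _ => ?_)
  rw [← Finset.mul_sum]
  congr 1
  exact Equiv.sum_comp (Equiv.addLeft y) f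

lemma corr_abs_sum (f : ZMod p → ℝ) : ∑ x, |corr p f x| ≤ (∑ x, |f x|) ^ 2 := by
  rw [← corr_sum (fun x => |f x|)]
  refine Finset.sum_le_sum (fun x _ => ?_)
  unfold corr
  refine (Finset.abs_sum_le_sum_abs _ _).trans (le_of_eq (Finset.sum_congr rfl fun y _ => abs_mul _ _))

lemma corr_inv (f : ZMod p → ℝ) (γ : ZMod p) (h0 : γ ≠ 0) (h : ∀ x, f (γ * x) = f x) (x : ZMod p) :
    corr p f (γ * x) = corr p f x := by
  unfold corr
  rw [← Equiv.sum_comp (Equiv.mulLeft₀ γ h0) (fun y => f y * f (y + γ * x))]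
  refine Finset.sum_congr rfl (fun y _ => ?_)
  change f (γ * y) * f (γ * y + γ * x) = _
  rw [← mul_add, h, h]

lemma corr_pd (f : ZMod p → ℝ) (M : ℕ) (Q : Finset (ZMod p)) :
    (∑ x ∈ Q, corr p f x ^ M) ^ 2 ≤
      (corr p f 0) ^ M * ∑ x ∈ Q, ∑ y ∈ Q, corr p f (y - x) ^ M := by
  let Fz : (Fin M → ZMod p) → ZMod p → ℝ := fun z x => ∏ i, f (z i + x)
  have key : ∀ x y, corr p f (y - x) ^ M = ∑ z, Fz z x * Fz z y := by
    intro x y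
    rw [corr_shift, Fintype.sum_pow]
    exact Finset.sum_congr rfl (fun z _ => Finset.prod_mul_distrib)
  have e1 : ∑ x ∈ Q, corr p f x ^ M = ∑ z, Fz z 0 * ∑ x ∈ Q, Fz z x := by
    calc _ = ∑ x ∈ Q, ∑ z, Fz z 0 * Fz z x := Finset.sum_congr rfl (fun x _ => by
            rw [← key, sub_zero])
      _ = ∑ z, ∑ x ∈ Q, Fz z 0 * Fz z x := Finset.sum_comm
      _ = _ := Finset.sum_congr rfl (fun z _ => by rw [Finset.mul_sum])
  have e2 : corr p f 0 ^ M = ∑ z, Fz z 0 ^ 2 := by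
    have := key 0 0
    rw [sub_zero] at this
    rw [this]
    exact Finset.sum_congr rfl (fun z _ => by rw [sq])
  have e3 : ∑ x ∈ Q, ∑ y ∈ Q, corr p f (y - x) ^ M = ∑ z, (∑ x ∈ Q, Fz z x) ^ 2 := by
    simp only [key]
    calc _ = ∑ x ∈ Q, ∑ z, ∑ y ∈ Q, Fz z x * Fz z y :=
          Finset.sum_congr rfl (fun x _ => Finset.sum_comm)
      _ = ∑ z, ∑ x ∈ Q, ∑ y ∈ Q, Fz z x * Fz z y := Finset.sum_comm
      _ = _ := Finset.sum_congr rfl (fun z _ => by rw [sq, Finset.sum_mul_sum])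
  rw [e1, e2, e3]
  exact Finset.sum_mul_sq_le_sq_mul_sq _ _ _

lemma corr_S (f : ZMod p → ℝ) (l : ZMod p) :
    ∑ x, corr p f x * corr p f (l * x) = ∑ w, (∑ y, f y * f (w + l * y)) ^ 2 := by
  have h2 : ∀ x, corr p f (l * x) = corr p f (l * x) := fun _ => rfl
  calc ∑ x, corr p f x * corr p f (l * x)
      = ∑ x, ∑ y, f y * f (y + x) * corr p f (l * x) := by
        refine Finset.sum_congr rfl (fun x _ => ?_)
        conv_lhs => rw [corr, Finset.sum_mul]
    _ = ∑ y, ∑ x, f y * f (y + x) * corr p f (l * x) := Finset.sum_comm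
    _ = ∑ y, ∑ y', f y * f y' * corr p f (l * y' - l * y) := by
        refine Finset.sum_congr rfl (fun y _ => ?_)
        rw [← Equiv.sum_comp (Equiv.addLeft y) (fun y' => f y * f y' * corr p f (l * y' - l * y))]
        refine Finset.sum_congr rfl (fun x _ => ?_)
        simp only [Equiv.coe_addLeft]
        congr 2; ring
    _ = ∑ y, ∑ y', ∑ w, (f y * f (w + l * y)) * (f y' * f (w + l * y')) := by
        refine Finset.sum_congr rfl (fun y _ => Finset.sum_congr rfl (fun y' _ => ?_))
        rw [corr_shift, Finset.mul_sum]
        exact Finset.sum_congr rfl (fun w _ => by ring)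
    _ = ∑ y, ∑ w, ∑ y', (f y * f (w + l * y)) * (f y' * f (w + l * y')) :=
        Finset.sum_congr rfl (fun y _ => Finset.sum_comm)
    _ = ∑ w, ∑ y, ∑ y', (f y * f (w + l * y)) * (f y' * f (w + l * y')) := Finset.sum_comm
    _ = _ := Finset.sum_congr rfl (fun w _ => by rw [sq, Finset.sum_mul_sum])

lemma corr_energy (f : ZMod p → ℝ) (hf : ∑ x, f x = 0) (G : Finset (ZMod p))
    (hG0 : ∀ γ ∈ G, γ ≠ 0) (hinv : ∀ γ ∈ G, ∀ x, f (γ * x) = f x) :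
    (G.card : ℝ) * ∑ x, corr p f x ^ 2 ≤ p * (corr p f 0) ^ 2 := by
  have h0 : ∑ x, corr p f x = 0 := by rw [corr_sum, hf]; norm_num
  have h1 : ∑ l, ∑ x, corr p f x * corr p f (l * x) = p * (corr p f 0) ^ 2 := by
    rw [Finset.sum_comm, Finset.sum_eq_single 0]
    · simp only [mul_zero, Finset.sum_const, Finset.card_univ, ZMod.card, nsmul_eq_mul]; ring
    · intro x _ hx
      rw [← Finset.mul_sum]
      have : ∑ l, corr p f (l * x) = ∑ y, corr p f y :=
        Equiv.sum_comp (Equiv.mulRight₀ x hx) (fun y => corr p f y)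
      rw [this, h0, mul_zero]
    · exact fun h => absurd (Finset.mem_univ _) h
  rw [← h1]
  calc (G.card : ℝ) * ∑ x, corr p f x ^ 2 = ∑ l ∈ G, ∑ x, corr p f x * corr p f (l * x) := by
        rw [← nsmul_eq_mul, ← Finset.sum_const]
        refine Finset.sum_congr rfl (fun l hl => Finset.sum_congr rfl (fun x _ => ?_))
        rw [corr_inv f l (hG0 l hl) (hinv l hl), sq]
    _ ≤ _ := Finset.sum_le_sum_of_subset_of_nonneg (Finset.subset_univ _) (fun l _ _ => by
        rw [corr_S]; exact Finset.sum_nonneg (fun w _ => sq_nonneg _))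

lemma corr_orbit (f : ZMod p → ℝ) (G : Finset (ZMod p))
    (hG0 : ∀ γ ∈ G, γ ≠ 0) (hinv : ∀ γ ∈ G, ∀ x, f (γ * x) = f x) (x : ZMod p) (hx : x ≠ 0) :
    (G.card : ℝ) * |corr p f x| ≤ (∑ x, |f x|) ^ 2 := by
  refine le_trans ?_ (corr_abs_sum f)
  calc (G.card : ℝ) * |corr p f x| = ∑ l ∈ G, |corr p f (l * x)| := by
        rw [← nsmul_eq_mul, ← Finset.sum_const]
        refine Finset.sum_congr rfl (fun l hl => ?_)
        rw [corr_inv f l (hG0 l hl) (hinv l hl)]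
    _ = ∑ y ∈ G.image (fun l => l * x), |corr p f y| := by
        rw [Finset.sum_image (fun a _ c _ h => mul_right_cancel₀ hx h)]
    _ ≤ _ := Finset.sum_le_sum_of_subset_of_nonneg (Finset.subset_univ _) (fun l _ _ => abs_nonneg _)

end S3

theorem stmt3 :
    ∃ C : ℝ, 1 ≤ C ∧
      ∀ (p : ℕ) [Fact p.Prime], Odd p →
        ∀ H : Subgroup (ZMod p)ˣ,
          ∀ f : ZMod p → ℝ,
            (∀ γ ∈ H, ∀ x : ZMod p, f ((γ : ZMod p) * x) = f x) →
            f ≠ 0 →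
            (∑ x, f x) = 0 →
            ∀ k : ℕ, 2 ≤ k →
              EplusF p (2 ^ (k + 1)) f ≤
                  C * (1 + Real.logb 2 (l1norm p f / l2norm p f)) *
                    (l2norm p f) ^ (2 ^ (k + 1)) * EplusF p (2 ^ k) f *
                      (Nat.card H : ℝ) ^ (-(1 / 8) : ℝ) ∨
                EplusF p (2 ^ (k + 1)) f ≤ 2 * (l2norm p f) ^ (2 ^ (k + 2)) := by
  refine ⟨240, by norm_num, ?_⟩
  intro p hp hodd H f hinv hf0 hsum k hk
  have hp2 : p ≠ 2 := by rintro rfl; exact absurd hodd (by decide)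
  classical
  let G : Finset (ZMod p) := Finset.image (fun γ : H => ((γ : (ZMod p)ˣ) : ZMod p)) (Finset.univ : Finset H)
  have hGc : G.card = Nat.card H := by
    rw [Finset.card_image_of_injective _ (fun a b hab => Subtype.ext (Units.ext hab)),
      Finset.card_univ, Nat.card_eq_fintype_card]
  have hGm : ∀ γ ∈ G, γ ≠ 0 ∧ ∀ x, f (γ * x) = f x := by
    intro γ hγ
    obtain ⟨a, _, rfl⟩ := Finset.mem_image.mp hγ
    exact ⟨Units.ne_zero _, hinv a a.2⟩
  have hGpos : 0 < G.card := by rw [hGc]; exact Nat.card_pos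
  set ν : ℝ := ∑ x, f x ^ 2 with hν
  have hνp : 0 < ν := by
    obtain ⟨x, hx⟩ := Function.ne_iff.mp hf0
    refine Finset.sum_pos' (fun x _ => sq_nonneg _) ⟨x, Finset.mem_univ _, ?_⟩
    have : f x ≠ 0 := hx
    positivity
  have hc0 : corr p f 0 = ν := S3.corr_zero f
  have hl2 : l2norm p f ^ 2 = ν := Real.sq_sqrt hνp.le
  have hl2p : 0 < l2norm p f := Real.sqrt_pos.mpr hνp
  have hl1 : ν ≤ l1norm p f ^ 2 := by
    refine le_trans ?_ (S3.corr_abs_sum f)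
    rw [← hc0]
    exact (le_abs_self _).trans (Finset.single_le_sum (f := fun x => |corr p f x|)
      (fun x _ => abs_nonneg _) (Finset.mem_univ 0))
  have hl1p : 0 ≤ l1norm p f := Finset.sum_nonneg (fun x _ => abs_nonneg _)
  set M := 2 ^ k with hM
  have hM4 : 4 ≤ M := by
    calc 4 = 2 ^ 2 := by norm_num
      _ ≤ 2 ^ k := Nat.pow_le_pow_right (by norm_num) hk
  have hMe : Even M := by
    rw [hM]; exact (Nat.even_pow.mpr ⟨even_two, by omega⟩)
  set n : ℝ := (Nat.card H : ℝ) with hn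
  have hn1 : 0 < n := by rw [hn, ← hGc]; exact_mod_cast hGpos
  set Λ := l1norm p f / l2norm p f with hΛ
  have hΛ2 : Λ ^ 2 = l1norm p f ^ 2 / ν := by rw [hΛ, div_pow, hl2]
  have hΛ1 : 1 ≤ Λ := by
    rw [hΛ, one_le_div hl2p]
    exact le_of_sq_le_sq (by rw [hl2]; exact hl1) hl1p
  set g : ZMod p → ℝ := fun x => corr p f x / ν with hg
  have hcg : ∀ x, corr p f x = ν * g x := fun x => by simp only [hg]; field_simp
  have main := S3.main_norm hp2 G hGpos (fun γ hγ => (hGm γ hγ).1) g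
    (fun γ hγ x => by simp only [hg]; rw [S3.corr_inv f γ (hGm γ hγ).1 (hGm γ hγ).2])
    M hM4 hMe (by simp only [hg]; rw [hc0, div_self hνp.ne'])
    (fun x => by
      simp only [hg]
      rw [abs_div, abs_of_pos hνp, div_le_one hνp]
      exact S3.corr_abs_le f x)
    (fun Q => by
      have h := S3.corr_pd f M Q
      rw [hc0] at h
      simp only [hcg, mul_pow, ← Finset.mul_sum] at h
      have hνM : 0 < (ν ^ M) ^ 2 := by positivity
      refine le_of_mul_le_mul_left ?_ hνM
      linarith)
    (by
      have h := S3.corr_energy f hsum G (fun γ hγ => (hGm γ hγ).1) (fun γ hγ => (hGm γ hγ).2)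
      rw [hc0] at h
      simp only [hcg, mul_pow, ← Finset.mul_sum] at h
      have hν2 : 0 < ν ^ 2 := by positivity
      refine le_of_mul_le_mul_left ?_ hν2
      linarith)
    Λ hΛ1
    (fun x hx => by
      have h := S3.corr_orbit f G (fun γ hγ => (hGm γ hγ).1) (fun γ hγ => (hGm γ hγ).2) x hx
      rw [hΛ2, le_div_iff₀ hνp]
      rw [hcg, abs_mul, abs_of_pos hνp] at h
      change _ ≤ l1norm p f ^ 2 at h
      linarith)
    (n ^ (1 / 16 : ℝ)) (Real.rpow_pos_of_pos hn1 _)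
    (by
      rw [hGc, ← hn, ← Real.rpow_natCast, ← Real.rpow_mul hn1.le]
      norm_num)
  have hb2 : 1 / (n ^ (1 / 16 : ℝ)) ^ 2 = n ^ (-(1 / 8) : ℝ) := by
    rw [← Real.rpow_natCast, ← Real.rpow_mul hn1.le, Real.rpow_neg hn1.le, one_div]
    norm_num
  rw [hb2] at main
  have hE2 : EplusF p (2 ^ (k + 1)) f = (ν ^ M) ^ 2 * ∑ x, (g x ^ M) ^ 2 := by
    unfold EplusF
    rw [Finset.mul_sum]
    refine Finset.sum_congr rfl (fun x _ => ?_)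
    rw [hcg, pow_succ, ← hM, pow_mul, mul_pow, mul_pow]
  have hE1 : EplusF p M f = ν ^ M * ∑ x, g x ^ M := by
    unfold EplusF
    rw [Finset.mul_sum]
    refine Finset.sum_congr rfl (fun x _ => ?_)
    rw [hcg, mul_pow]
  have hp1 : l2norm p f ^ (2 ^ (k + 1)) = ν ^ M := by
    rw [pow_succ, mul_comm, pow_mul, hl2]
  have hp3 : l2norm p f ^ (2 ^ (k + 2)) = (ν ^ M) ^ 2 := by
    rw [show 2 ^ (k + 2) = 2 * (M * 2) by rw [hM]; ring, pow_mul, hl2, pow_mul]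
  rw [hE2, hE1, hp1, hp3]
  have hνM : 0 < (ν ^ M) ^ 2 := by positivity
  rcases main with h | h
  · left
    have := mul_le_mul_of_nonneg_left h hνM.le
    refine this.trans (le_of_eq ?_)
    ring
  · right
    have := mul_le_mul_of_nonneg_left h hνM.le
    linarith
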